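/- arXiv:2510.20511 — 3 statements merged into one kernel-verified Lean document; each statement's English description precedes it below -/
import Mathlib

section
/- Let n ≥ 1 and let X be a centered, log-concave random vector in ℝⁿ. For θ ∈ ℝⁿ define H_θ = E[⟨X,θ⟩·(X⊗X)] ∈ ℝ^{n×n}, and set Hᵢ = H_{eᵢ} for the standard basis vectors e₁,…,eₙ. Then ‖Σᵢ₌₁ⁿ Hᵢ²‖_op ≤ κ_n²·‖Cov(X)‖_op³, where ‖·‖_op is the operator norm and Cov(X) is the covariance matrix of X. -/
/-!
Write `A = Cov(X)`. Since `X` has a density, `A` is positive definite. For a fixed vector `θ`, factor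
`A = Tᵀ T` with `T θ = ‖T θ‖ e₁` (`exists_factor`). Then `X = Tᵀ Y` with `Y` isotropic and
log-concave, and `⟨X, θ⟩ = ‖T θ‖ Y₁`, so that
`E[⟨X, θ⟩ X ⊗ X] = ‖T θ‖ Tᵀ E[Y₁ Y ⊗ Y] T`. As `‖T‖² ≤ ‖A‖`, this gives
`Σᵢ ‖Hᵢ θ‖² = ‖E[⟨X, θ⟩ X ⊗ X]‖_HS² ≤ κₙ² ‖A‖³ ‖θ‖²` (`sum_sq_third_le`), and the bound on the
operator norm of `Σᵢ Hᵢ²` follows by the Cauchy–Schwarz inequality and the symmetry of the `Hᵢ`.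

Two analytic facts are needed: third moments of a log-concave measure are finite, and those of
isotropic ones are bounded in terms of `n` only, so that `κₙ` is the supremum of a bounded set.
Both come from `lintegral_norm_cube_le`, which bounds `E ‖X‖³` in terms of `n` and any radius `r`
outside which the mass is at most `e⁻¹ / 2 ^ (n + 1)`. Its proof applies log-concavity between a far
point `x` and the points of the ball of radius `r`, and needs no log-concavity of marginals.
-/

open MeasureTheory Real Pointwise RealInnerProductSpace
open scoped ENNReal

noncomputable section

/-- A convex body: a compact convex set with non-empty interior. -/
def IsConvexBody {n : ℕ} (K : Set (EuclideanSpace ℝ (Fin n))) : Prop :=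
  IsCompact K ∧ Convex ℝ K ∧ (interior K).Nonempty

/-- The uniform probability measure on a set `K`. -/
def unifOn {n : ℕ} (K : Set (EuclideanSpace ℝ (Fin n))) : Measure (EuclideanSpace ℝ (Fin n)) :=
  (volume K)⁻¹ • volume.restrict K

/-- A probability measure `μ` on `ℝⁿ` is isotropic: its barycenter vanishes and its
covariance matrix is the identity. -/
def IsIsotropicMeasure {n : ℕ} (μ : Measure (EuclideanSpace ℝ (Fin n))) : Prop :=
  (∀ i, ∫ x, x i ∂μ = 0) ∧ ∀ i j, ∫ x, x i * x j ∂μ = if i = j then 1 else 0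

/-- A convex body is in isotropic position if the uniform probability measure on it
is isotropic. -/
def IsIsotropicBody {n : ℕ} (K : Set (EuclideanSpace ℝ (Fin n))) : Prop :=
  IsIsotropicMeasure (unifOn K)

/-- A log-concave density: nonnegative, and multiplicatively convex. This is equivalent to:
`{p > 0}` is convex and `log (1/p)` is convex on it. -/
def IsLogConcaveDensity {n : ℕ} (p : EuclideanSpace ℝ (Fin n) → ℝ) : Prop :=
  (∀ x, 0 ≤ p x) ∧ ∀ x y : EuclideanSpace ℝ (Fin n), ∀ t : ℝ, 0 ≤ t → t ≤ 1 →
    p x ^ t * p y ^ (1 - t) ≤ p (t • x + (1 - t) • y)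

/-- A measure on `ℝⁿ` is log-concave if it has a log-concave density w.r.t. Lebesgue. -/
def IsLogConcaveMeasure {n : ℕ} (μ : Measure (EuclideanSpace ℝ (Fin n))) : Prop :=
  ∃ p : EuclideanSpace ℝ (Fin n) → ℝ, Measurable p ∧ IsLogConcaveDensity p ∧
    μ = volume.withDensity fun x => ENNReal.ofReal (p x)

/-- The standard Gaussian probability measure on `ℝⁿ`. -/
def stdGaussian (n : ℕ) : Measure (EuclideanSpace ℝ (Fin n)) :=
  volume.withDensity fun x => ENNReal.ofReal ((2 * π) ^ (-(n : ℝ) / 2) * Real.exp (-‖x‖ ^ 2 / 2))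

/-- The Poincaré constant of a measure: the least `A ≥ 0` such that
`Var f ≤ A ⬝ E |∇ f|²` for all locally Lipschitz `f`. -/
def poincareConst {n : ℕ} (μ : Measure (EuclideanSpace ℝ (Fin n))) : ℝ :=
  sInf {A : ℝ | 0 ≤ A ∧ ∀ f : EuclideanSpace ℝ (Fin n) → ℝ, LocallyLipschitz f →
    ∫ x, (f x - ∫ y, f y ∂μ) ^ 2 ∂μ ≤ A * ∫ x, ‖gradient f x‖ ^ 2 ∂μ}

/-- The KLS constant `ψₙ`. -/
def KLSConst (n : ℕ) : ℝ :=
  sSup {s : ℝ | ∃ μ : Measure (EuclideanSpace ℝ (Fin n)), IsProbabilityMeasure μ ∧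
    IsLogConcaveMeasure μ ∧ IsIsotropicMeasure μ ∧ s = Real.sqrt (poincareConst μ)}

/-- The Hilbert-Schmidt norm of a matrix. -/
def hsNorm {n : ℕ} (M : Matrix (Fin n) (Fin n) ℝ) : ℝ :=
  Real.sqrt (∑ i, ∑ j, (M i j) ^ 2)

/-- The coefficient `κₙ`, the supremum of `‖E [X₁ (X ⊗ X)]‖_HS` over all isotropic
log-concave random vectors `X` in `ℝⁿ`. -/
def kappaConst (n : ℕ) : ℝ :=
  sSup {s : ℝ | ∃ μ : Measure (EuclideanSpace ℝ (Fin n)), IsProbabilityMeasure μ ∧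
    IsLogConcaveMeasure μ ∧ IsIsotropicMeasure μ ∧ ∃ h : 0 < n,
    s = hsNorm (Matrix.of fun i j => ∫ x, x ⟨0, h⟩ * (x i * x j) ∂μ)}

/-- A gauge function on `ℝⁿ`: non-negative, convex, positively homogeneous. -/
def IsGauge {n : ℕ} (f : EuclideanSpace ℝ (Fin n) → ℝ) : Prop :=
  (∀ x, 0 ≤ f x) ∧ ConvexOn ℝ Set.univ f ∧
    ∀ (c : ℝ), 0 ≤ c → ∀ x, f (c • x) = c * f x

/-- `M(K)`: the mean of the Minkowski functional of `K` over the unit sphere, w.r.t. the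
uniform probability measure on the sphere. -/
def Mparam (n : ℕ) (K : Set (EuclideanSpace ℝ (Fin n))) : ℝ :=
  ∫ x : Metric.sphere (0 : EuclideanSpace ℝ (Fin n)) 1,
    gauge K x ∂(((volume : Measure (EuclideanSpace ℝ (Fin n))).toSphere Set.univ)⁻¹ •
      (volume : Measure (EuclideanSpace ℝ (Fin n))).toSphere)

/-- The polar body. -/
def polarBody {n : ℕ} (K : Set (EuclideanSpace ℝ (Fin n))) : Set (EuclideanSpace ℝ (Fin n)) :=
  {x | ∀ y ∈ K, ⟪x, y⟫ ≤ 1}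

/-- `R(K)`: the maximal Euclidean norm of a point of `K`. -/
def Rparam {n : ℕ} (K : Set (EuclideanSpace ℝ (Fin n))) : ℝ :=
  sSup {r : ℝ | ∃ x ∈ K, r = ‖x‖}

/-- The operator norm `‖A : K → T‖ = sup_{x ≠ 0} ‖Ax‖_T / ‖x‖_K` (Minkowski functionals). -/
def mapNorm {n : ℕ} (K T : Set (EuclideanSpace ℝ (Fin n)))
    (A : Matrix (Fin n) (Fin n) ℝ) : ℝ :=
  sSup {r : ℝ | ∃ x : EuclideanSpace ℝ (Fin n), x ≠ 0 ∧
    r = gauge T (Matrix.toEuclideanLin A x) / gauge K x}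

/-- The ℓ₂ operator norm of a matrix. -/
def matOpNorm {n : ℕ} (M : Matrix (Fin n) (Fin n) ℝ) : ℝ :=
  ‖LinearMap.toContinuousLinearMap (Matrix.toEuclideanLin M)‖

/-- The covariance matrix of a measure on `ℝⁿ`. -/
def covMatrix {n : ℕ} (μ : Measure (EuclideanSpace ℝ (Fin n))) : Matrix (Fin n) (Fin n) ℝ :=
  Matrix.of fun i j => ∫ x, (x i - ∫ y, y i ∂μ) * (x j - ∫ y, y j ∂μ) ∂μ

/-! ### Exponential decay and third moments of log-concave densities -/

theorem lintegral_comp_affine {n : ℕ} (f : EuclideanSpace ℝ (Fin n) → ℝ≥0∞) (hf : Measurable f)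
    (a : EuclideanSpace ℝ (Fin n)) {c : ℝ} (hc : 0 < c) :
    ∫⁻ y, f (a + c • y) = ENNReal.ofReal ((c ^ n)⁻¹) * ∫⁻ z, f z := by
  have h1 : ∫⁻ y, f (a + c • y) =
      ∫⁻ z, f (a + z) ∂(Measure.map (fun y => c • y) (volume : Measure (EuclideanSpace ℝ (Fin n)))) := by
    rw [lintegral_map (by fun_prop) (by fun_prop)]
  rw [h1, Measure.map_addHaar_smul _ hc.ne', lintegral_smul_measure, lintegral_add_left_eq_self]
  simp [abs_of_pos, hc]

/-- A log-concave probability density is bounded by some `m ^ 2` with `m * ∫ √p = 2 ^ n`. Integrating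
`√(p y) * √(p x) ≤ p ((y + x) / 2)` over `x` bounds `√(p y) * ∫ √p` by `2 ^ n`, and `m` is then
defined as `2 ^ n / ∫ √p`. -/
theorem sqrt_density_bound {n : ℕ} {p : EuclideanSpace ℝ (Fin n) → ℝ} (hpm : Measurable p)
    (hp : IsLogConcaveDensity p) (h1 : ∫⁻ x, ENNReal.ofReal (p x) = 1) :
    ∃ m : ℝ, 0 < m ∧ (∀ x, √(p x) ≤ m) ∧
      ENNReal.ofReal m * ∫⁻ x, ENNReal.ofReal (√(p x)) = ENNReal.ofReal (2 ^ n) := by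
  set S := ∫⁻ x, ENNReal.ofReal (√(p x)) with hS
  have hmeas : Measurable fun x => ENNReal.ofReal (√(p x)) := by fun_prop
  have key : ∀ y, ENNReal.ofReal (√(p y)) * S ≤ ENNReal.ofReal (2 ^ n) := by
    intro y
    rw [hS, ← lintegral_const_mul _ hmeas]
    calc ∫⁻ x, ENNReal.ofReal (√(p y)) * ENNReal.ofReal (√(p x))
        ≤ ∫⁻ x, ENNReal.ofReal (p ((1 / 2 : ℝ) • y + (1 / 2 : ℝ) • x)) := by
          refine lintegral_mono fun x => ?_
          rw [← ENNReal.ofReal_mul (Real.sqrt_nonneg _)]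
          refine ENNReal.ofReal_le_ofReal ?_
          have := hp.2 y x (1 / 2) (by norm_num) (by norm_num)
          rw [Real.sqrt_eq_rpow, Real.sqrt_eq_rpow]
          norm_num at this ⊢
          exact this
      _ = ENNReal.ofReal (2 ^ n) := by
          rw [lintegral_comp_affine (fun x => ENNReal.ofReal (p x)) (by fun_prop) _ (by norm_num), h1]
          simp
  have hpos : ∃ y, 0 < p y := by
    by_contra! h
    have : ∫⁻ x, ENNReal.ofReal (p x) = 0 := by
      simp [ENNReal.ofReal_of_nonpos (h _)]
    simp [this] at h1
  obtain ⟨y₀, hy₀⟩ := hpos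
  have hS0 : S ≠ 0 := by
    intro h0
    rw [hS, lintegral_eq_zero_iff hmeas] at h0
    have : ∫⁻ x, ENNReal.ofReal (p x) = 0 := by
      rw [lintegral_eq_zero_iff (by fun_prop)]
      filter_upwards [h0] with x hx
      have hx' : √(p x) ≤ 0 := ENNReal.ofReal_eq_zero.1 hx
      have : p x ≤ 0 := Real.sqrt_eq_zero'.1 (le_antisymm hx' (Real.sqrt_nonneg _))
      exact ENNReal.ofReal_eq_zero.2 this
    simp [this] at h1
  have hST : S ≠ ⊤ := by
    intro hT
    have := key y₀
    rw [hT, ENNReal.mul_top] at this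
    · exact absurd this (by simp)
    · simpa using hy₀
  have hSr : 0 < S.toReal := ENNReal.toReal_pos hS0 hST
  have hSe : S = ENNReal.ofReal S.toReal := (ENNReal.ofReal_toReal hST).symm
  refine ⟨2 ^ n / S.toReal, by positivity, fun x => ?_, ?_⟩
  · have := key x
    rw [hSe, ← ENNReal.ofReal_mul (Real.sqrt_nonneg _),
      ENNReal.ofReal_le_ofReal_iff (by positivity)] at this
    rwa [le_div_iff₀ hSr]
  · rw [hSe, ← ENNReal.ofReal_mul (by positivity), ENNReal.toReal_ofReal hSr.le,
      div_mul_cancel₀ _ hSr.ne']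

/-- Exponential decay of a log-concave density outside a ball whose complement has mass at most
`e⁻¹ / 2 ^ (n + 1)`. With `l = 2 * r / ‖x‖`, log-concavity gives
`(p x / m ^ 2) ^ l * p y ≤ p (l • x + (1 - l) • y)`; for `‖y‖ ≤ r` the point on the right lies
outside the ball of radius `r`, so integrating over such `y` yields `(p x / m ^ 2) ^ l ≤ e⁻¹`. -/
theorem density_decay {n : ℕ} {p : EuclideanSpace ℝ (Fin n) → ℝ} (hpm : Measurable p)
    (hp : IsLogConcaveDensity p) (h1 : ∫⁻ x, ENNReal.ofReal (p x) = 1)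
    {m : ℝ} (hm : 0 < m) (hpm' : ∀ x, √(p x) ≤ m) {r : ℝ} (hr : 0 < r)
    (htail : ∫⁻ x in {x : EuclideanSpace ℝ (Fin n) | r < ‖x‖}, ENNReal.ofReal (p x) ≤
      ENNReal.ofReal (exp (-1) / 2 ^ (n + 1))) (x : EuclideanSpace ℝ (Fin n)) (hx : 4 * r ≤ ‖x‖) :
    √(p x) ≤ m * exp (-(‖x‖ / (4 * r))) := by
  have hxpos : 0 < ‖x‖ := by linarith
  set l : ℝ := 2 * r / ‖x‖ with hl
  have hl0 : 0 < l := by positivity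
  have hl1 : l ≤ 1 / 2 := by rw [hl, div_le_iff₀ hxpos]; linarith
  have hlx : l * ‖x‖ = 2 * r := by rw [hl]; field_simp
  have hple : ∀ y, p y ≤ m ^ 2 := fun y => by
    have := Real.sq_sqrt (hp.1 y)
    rw [← this]; exact pow_le_pow_left₀ (Real.sqrt_nonneg _) (hpm' y) 2
  set a : ℝ := (p x / m ^ 2) ^ l with ha
  have hpx : 0 ≤ p x / m ^ 2 := div_nonneg (hp.1 x) (by positivity)
  have ha0 : 0 ≤ a := by positivity
  have hpt : ∀ y, a * p y ≤ p (l • x + (1 - l) • y) := by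
    intro y
    refine le_trans ?_ (hp.2 x y l hl0.le (by linarith))
    rcases (hp.1 y).eq_or_lt with h0 | h0
    · rw [← h0, mul_zero, Real.zero_rpow (by linarith), mul_zero]
    · rw [ha, Real.div_rpow (hp.1 x) (by positivity), Real.rpow_sub h0, Real.rpow_one]
      have e1 : p y ^ l ≤ (m ^ 2) ^ l := Real.rpow_le_rpow h0.le (hple y) hl0.le
      have e2 : 0 < p y ^ l := Real.rpow_pos_of_pos h0 _
      have e3 : 0 ≤ p x ^ l := Real.rpow_nonneg (hp.1 x) _
      rw [div_mul_eq_mul_div, mul_div_assoc]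
      gcongr
  set Bc : Set (EuclideanSpace ℝ (Fin n)) := {x | r < ‖x‖} with hBc
  have hBm : MeasurableSet Bc := measurableSet_lt measurable_const measurable_norm
  have hε : exp (-1) / 2 ^ (n + 1) ≤ 1 / 2 := by
    have h1 : exp (-1) ≤ 1 := by simp
    have h2 : (2 : ℝ) ≤ 2 ^ (n + 1) := by
      rw [pow_succ]; nlinarith [one_le_pow₀ (one_le_two : (1 : ℝ) ≤ 2) (n := n)]
    exact div_le_div₀ (by norm_num) h1 (by norm_num) h2
  have hB : ENNReal.ofReal (1 / 2) ≤ ∫⁻ y in Bcᶜ, ENNReal.ofReal (p y) := by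
    have hadd := lintegral_add_compl (fun y => ENNReal.ofReal (p y)) hBm (μ := volume)
    rw [h1] at hadd
    have h3 : ∫⁻ y in Bc, ENNReal.ofReal (p y) ≤ ENNReal.ofReal (1 / 2) :=
      htail.trans (ENNReal.ofReal_le_ofReal hε)
    by_contra! hlt
    have := ENNReal.add_lt_add_of_le_of_lt (ne_top_of_le_ne_top ENNReal.ofReal_ne_top h3) h3 hlt
    rw [hadd, ← ENNReal.ofReal_add (by norm_num) (by norm_num)] at this
    norm_num at this
  have hchain : ENNReal.ofReal a * ENNReal.ofReal (1 / 2) ≤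
      ENNReal.ofReal (2 ^ n) * ENNReal.ofReal (exp (-1) / 2 ^ (n + 1)) := by
    calc ENNReal.ofReal a * ENNReal.ofReal (1 / 2)
        ≤ ENNReal.ofReal a * ∫⁻ y in Bcᶜ, ENNReal.ofReal (p y) := by gcongr
      _ = ∫⁻ y, Bcᶜ.indicator (fun y => ENNReal.ofReal a * ENNReal.ofReal (p y)) y := by
          rw [lintegral_indicator hBm.compl, lintegral_const_mul _ (by fun_prop)]
      _ ≤ ∫⁻ y, Bc.indicator (fun z => ENNReal.ofReal (p z)) (l • x + (1 - l) • y) := by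
          refine lintegral_mono fun y => ?_
          by_cases hy : y ∈ Bcᶜ
          · have hz : l • x + (1 - l) • y ∈ Bc := by
              have hy' : ‖y‖ ≤ r := by simpa [hBc] using hy
              have t := norm_sub_le (l • x + (1 - l) • y) ((1 - l) • y)
              rw [add_sub_cancel_right, norm_smul, norm_smul, Real.norm_of_nonneg hl0.le,
                Real.norm_of_nonneg (by linarith : 0 ≤ 1 - l), hlx] at t
              show r < _
              nlinarith
            rw [Set.indicator_of_mem hy, Set.indicator_of_mem hz, ← ENNReal.ofReal_mul ha0]
            exact ENNReal.ofReal_le_ofReal (hpt y)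
          · rw [Set.indicator_of_notMem hy]; exact zero_le
      _ = ENNReal.ofReal (((1 - l) ^ n)⁻¹) * ∫⁻ z in Bc, ENNReal.ofReal (p z) := by
          rw [lintegral_comp_affine _ ((by fun_prop : Measurable
            fun z => ENNReal.ofReal (p z)).indicator hBm) _ (by linarith), lintegral_indicator hBm]
      _ ≤ _ := by
          gcongr
          rw [← inv_pow]
          refine pow_le_pow_left₀ (inv_nonneg.2 (by linarith)) ?_ n
          rw [inv_le_comm₀ (by linarith) (by norm_num)]
          linarith
  have hae : a ≤ exp (-1) := by
    rw [← ENNReal.ofReal_mul ha0, ← ENNReal.ofReal_mul (by positivity),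
      ENNReal.ofReal_le_ofReal_iff (by positivity)] at hchain
    have : (2 : ℝ) ^ n * (exp (-1) / 2 ^ (n + 1)) = exp (-1) * (1 / 2) := by
      rw [pow_succ]; field_simp
    rw [this] at hchain
    linarith
  have hfin : p x / m ^ 2 ≤ exp (-(‖x‖ / (2 * r))) := by
    have := Real.rpow_le_rpow ha0 hae (by positivity : 0 ≤ l⁻¹)
    rw [ha, Real.rpow_rpow_inv hpx hl0.ne', ← Real.exp_mul] at this
    convert this using 2
    rw [hl]; field_simp
  rw [div_le_iff₀ (by positivity)] at hfin
  refine Real.sqrt_le_iff.2 ⟨by positivity, hfin.trans (le_of_eq ?_)⟩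
  rw [mul_pow, ← Real.exp_nat_mul, mul_comm]
  congr 2
  field_simp
  norm_num

/-- The third absolute moment is controlled by the dimension and a radius with small tail. Writing
`p = √p * √p`, one factor supplies the decay `m * exp (-‖x‖ / (4 * r))`, and the integral of the
other is `2 ^ n / m`, so the bound `m` on `√p` cancels. -/
theorem lintegral_norm_cube_le {n : ℕ} {μ : Measure (EuclideanSpace ℝ (Fin n))}
    (hprob : IsProbabilityMeasure μ) (hlc : IsLogConcaveMeasure μ) {r : ℝ} (hr : 0 < r)
    (htail : μ {x | r < ‖x‖} ≤ ENNReal.ofReal (exp (-1) / 2 ^ (n + 1))) :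
    ∫⁻ x, ENNReal.ofReal (‖x‖ ^ 3) ∂μ ≤ ENNReal.ofReal ((4 * r) ^ 3 * (1 + 6 * 2 ^ n)) := by
  obtain ⟨p, hpm, hp, rfl⟩ := hlc
  have h1 : ∫⁻ x, ENNReal.ofReal (p x) = 1 := by
    have := hprob.measure_univ
    rwa [withDensity_apply _ MeasurableSet.univ, Measure.restrict_univ] at this
  rw [withDensity_apply _ (measurableSet_lt measurable_const measurable_norm)] at htail
  obtain ⟨m, hm, hpm', hS⟩ := sqrt_density_bound hpm hp h1
  have hdec := density_decay hpm hp h1 hm hpm' hr htail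
  have hpt : ∀ x, p x * ‖x‖ ^ 3 ≤ (4 * r) ^ 3 * p x + 6 * (4 * r) ^ 3 * (m * √(p x)) := by
    intro x
    have hpx := hp.1 x
    have hsx := Real.sqrt_nonneg (p x)
    rcases le_total ‖x‖ (4 * r) with h | h
    · have : ‖x‖ ^ 3 ≤ (4 * r) ^ 3 := pow_le_pow_left₀ (norm_nonneg _) h 3
      have : 0 ≤ 6 * (4 * r) ^ 3 * (m * √(p x)) := by positivity
      nlinarith
    · set u := ‖x‖ / (4 * r) with hu
      have hu0 : 0 ≤ u := by positivity
      have hxu : ‖x‖ = 4 * r * u := by rw [hu]; field_simp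
      -- the cubic Taylor term bounds `exp u` from below
      have h6 : u ^ 3 * exp (-u) ≤ 6 := by
        have := Real.pow_div_factorial_le_exp u hu0 3
        rw [Real.exp_neg, ← div_eq_mul_inv, div_le_iff₀ (Real.exp_pos u)]
        norm_num [Nat.factorial] at this
        linarith
      have hd := hdec x h
      rw [← hu] at hd
      have h7 : √(p x) * ‖x‖ ^ 3 ≤ 6 * (4 * r) ^ 3 * m := by
        calc √(p x) * ‖x‖ ^ 3 ≤ (m * exp (-u)) * ‖x‖ ^ 3 := by gcongr
          _ = (u ^ 3 * exp (-u)) * ((4 * r) ^ 3 * m) := by rw [hxu]; ring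
          _ ≤ 6 * ((4 * r) ^ 3 * m) := by gcongr
          _ = _ := by ring
      have h8 : p x * ‖x‖ ^ 3 = (√(p x) * ‖x‖ ^ 3) * √(p x) := by
        nth_rewrite 1 [← Real.mul_self_sqrt hpx]; ring
      have h9 := mul_le_mul_of_nonneg_right h7 hsx
      have : 0 ≤ (4 * r) ^ 3 * p x := by positivity
      rw [h8]; linarith
  rw [lintegral_withDensity_eq_lintegral_mul _ (by fun_prop) (by fun_prop)]
  calc _ ≤ ∫⁻ x, (ENNReal.ofReal ((4 * r) ^ 3) * ENNReal.ofReal (p x) +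
        ENNReal.ofReal (6 * (4 * r) ^ 3) * (ENNReal.ofReal m * ENNReal.ofReal (√(p x)))) := by
        refine lintegral_mono fun x => ?_
        have hpx := hp.1 x
        simp only [Pi.mul_apply]
        rw [← ENNReal.ofReal_mul hpx, ← ENNReal.ofReal_mul (by positivity),
          ← ENNReal.ofReal_mul (by positivity), ← ENNReal.ofReal_mul (by positivity),
          ← ENNReal.ofReal_add (by positivity) (by positivity)]
        exact ENNReal.ofReal_le_ofReal (hpt x)
    _ = _ := by
        rw [lintegral_add_left (by fun_prop), lintegral_const_mul _ (by fun_prop),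
          lintegral_const_mul _ (by fun_prop), lintegral_const_mul _ (by fun_prop), h1, hS,
          mul_one, ← ENNReal.ofReal_mul (by positivity),
          ← ENNReal.ofReal_add (by positivity) (by positivity)]
        congr 1; ring

theorem integrable_norm_cube {n : ℕ} {μ : Measure (EuclideanSpace ℝ (Fin n))}
    (hprob : IsProbabilityMeasure μ) (hlc : IsLogConcaveMeasure μ) :
    Integrable (fun x => ‖x‖ ^ 3) μ := by
  have hlim : Filter.Tendsto (fun k : ℕ => μ {x : EuclideanSpace ℝ (Fin n) | (k : ℝ) < ‖x‖})
      Filter.atTop (nhds 0) := by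
    have hempty : ⋂ k : ℕ, {x : EuclideanSpace ℝ (Fin n) | (k : ℝ) < ‖x‖} = ∅ := by
      ext x
      simp only [Set.mem_iInter, Set.mem_ofPred_eq, Set.mem_empty_iff_false, iff_false, not_forall,
        not_lt]
      exact exists_nat_ge ‖x‖
    have := tendsto_measure_iInter_atTop (μ := μ)
      (s := fun k : ℕ => {x : EuclideanSpace ℝ (Fin n) | (k : ℝ) < ‖x‖})
      (fun k => (measurableSet_lt measurable_const measurable_norm).nullMeasurableSet)
      (fun a b hab x (hx : (b : ℝ) < ‖x‖) =>
        show (a : ℝ) < ‖x‖ from lt_of_le_of_lt (Nat.cast_le.2 hab) hx) ⟨0, measure_ne_top _ _⟩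
    rwa [hempty, measure_empty] at this
  have hε : (0 : ℝ≥0∞) < ENNReal.ofReal (exp (-1) / 2 ^ (n + 1)) :=
    ENNReal.ofReal_pos.2 (by positivity)
  obtain ⟨k, hk, hk0⟩ :=
    ((hlim.eventually (ge_mem_nhds hε)).and (Filter.eventually_gt_atTop 0)).exists
  have hle := lintegral_norm_cube_le hprob hlc (Nat.cast_pos.2 hk0) hk
  refine ⟨by fun_prop, ?_⟩
  rw [hasFiniteIntegral_iff_ofReal (Filter.Eventually.of_forall fun x => by positivity)]
  exact hle.trans_lt ENNReal.ofReal_lt_top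

theorem integral_norm_cube_le {n : ℕ} {μ : Measure (EuclideanSpace ℝ (Fin n))}
    (hprob : IsProbabilityMeasure μ) (hlc : IsLogConcaveMeasure μ) {r : ℝ} (hr : 0 < r)
    (htail : μ {x | r < ‖x‖} ≤ ENNReal.ofReal (exp (-1) / 2 ^ (n + 1))) :
    ∫ x, ‖x‖ ^ 3 ∂μ ≤ (4 * r) ^ 3 * (1 + 6 * 2 ^ n) := by
  have hle := lintegral_norm_cube_le hprob hlc hr htail
  rw [← ofReal_integral_eq_lintegral_ofReal (integrable_norm_cube hprob hlc)
    (Filter.Eventually.of_forall fun x => by positivity),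
    ENNReal.ofReal_le_ofReal_iff (by positivity)] at hle
  exact hle

theorem abs_coord_le {n : ℕ} (x : EuclideanSpace ℝ (Fin n)) (i : Fin n) : |x i| ≤ ‖x‖ :=
  PiLp.norm_apply_le x i

theorem integrable_third {n : ℕ} {μ : Measure (EuclideanSpace ℝ (Fin n))}
    (hprob : IsProbabilityMeasure μ) (hlc : IsLogConcaveMeasure μ) (i j k : Fin n) :
    Integrable (fun x => x i * (x j * x k)) μ := by
  refine (integrable_norm_cube hprob hlc).mono' (by fun_prop)
    (Filter.Eventually.of_forall fun x => ?_)
  rw [Real.norm_eq_abs, abs_mul, abs_mul]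
  have := abs_coord_le x i
  have := abs_coord_le x j
  have := abs_coord_le x k
  calc |x i| * (|x j| * |x k|) ≤ ‖x‖ * (‖x‖ * ‖x‖) := by gcongr
    _ = ‖x‖ ^ 3 := by ring

theorem integrable_second {n : ℕ} {μ : Measure (EuclideanSpace ℝ (Fin n))}
    (hprob : IsProbabilityMeasure μ) (hlc : IsLogConcaveMeasure μ) (j k : Fin n) :
    Integrable (fun x => x j * x k) μ := by
  refine ((integrable_const (1 : ℝ)).add (integrable_norm_cube hprob hlc)).mono' (by fun_prop)
    (Filter.Eventually.of_forall fun x => ?_)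
  rw [Real.norm_eq_abs, abs_mul]
  have := abs_coord_le x j
  have := abs_coord_le x k
  have h0 := norm_nonneg x
  calc |x j| * |x k| ≤ ‖x‖ * ‖x‖ := by gcongr
    _ ≤ 1 + ‖x‖ ^ 3 := by
      rcases le_total ‖x‖ 1 with h | h
      · nlinarith [pow_nonneg h0 3]
      · nlinarith [mul_nonneg (mul_nonneg h0 h0) (sub_nonneg.2 h)]

theorem abs_third_le {n : ℕ} {μ : Measure (EuclideanSpace ℝ (Fin n))}
    (hprob : IsProbabilityMeasure μ) (hlc : IsLogConcaveMeasure μ) (i j k : Fin n) :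
    |∫ x, x i * (x j * x k) ∂μ| ≤ ∫ x, ‖x‖ ^ 3 ∂μ := by
  rw [← Real.norm_eq_abs]
  refine norm_integral_le_of_norm_le (integrable_norm_cube hprob hlc)
    (Filter.Eventually.of_forall fun x => ?_)
  rw [Real.norm_eq_abs, abs_mul, abs_mul]
  have := abs_coord_le x i
  have := abs_coord_le x j
  have := abs_coord_le x k
  calc |x i| * (|x j| * |x k|) ≤ ‖x‖ * (‖x‖ * ‖x‖) := by gcongr
    _ = ‖x‖ ^ 3 := by ring

/-- The third absolute moment is bounded uniformly over isotropic log-concave measures in a fixed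
dimension. -/
theorem exists_norm_cube_bound (n : ℕ) : ∃ C : ℝ, ∀ μ : Measure (EuclideanSpace ℝ (Fin n)),
    IsProbabilityMeasure μ → IsLogConcaveMeasure μ → IsIsotropicMeasure μ →
      ∫ x, ‖x‖ ^ 3 ∂μ ≤ C := by
  set ε : ℝ := exp (-1) / 2 ^ (n + 1) with hε
  have hε0 : 0 < ε := by positivity
  -- by Markov's inequality this radius leaves mass at most `n / r² ≤ ε` outside the ball
  set r : ℝ := √((n + 1) / ε) with hr
  have hr0 : 0 < r := by positivity
  refine ⟨(4 * r) ^ 3 * (1 + 6 * 2 ^ n), fun μ hprob hlc hiso => ?_⟩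
  refine integral_norm_cube_le hprob hlc hr0 ?_
  have hsq : (fun x : EuclideanSpace ℝ (Fin n) => ‖x‖ ^ 2) = fun x => ∑ i, x i * x i := by
    funext x
    rw [EuclideanSpace.real_norm_sq_eq]
    simp only [sq]
  have hint : Integrable (fun x : EuclideanSpace ℝ (Fin n) => ‖x‖ ^ 2) μ := by
    rw [hsq]
    exact integrable_finsetSum _ fun i _ => integrable_second hprob hlc i i
  have hval : ∫ x, ‖x‖ ^ 2 ∂μ = n := by
    rw [hsq, integral_finsetSum _ fun i _ => integrable_second hprob hlc i i]
    simp [hiso.2]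
  have hmk := mul_meas_ge_le_integral_of_nonneg
    (Filter.Eventually.of_forall fun x : EuclideanSpace ℝ (Fin n) => by positivity) hint (r ^ 2)
  rw [hval, hr, Real.sq_sqrt (by positivity)] at hmk
  have hreal : μ.real {x | r < ‖x‖} ≤ ε := by
    have hsub : {x : EuclideanSpace ℝ (Fin n) | r < ‖x‖} ⊆ {x | (n + 1) / ε ≤ ‖x‖ ^ 2} := by
      intro x hx
      have : r ^ 2 ≤ ‖x‖ ^ 2 := pow_le_pow_left₀ hr0.le (le_of_lt hx) 2
      rwa [hr, Real.sq_sqrt (by positivity)] at this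
    refine (measureReal_mono hsub).trans ?_
    have h2 : ((n : ℝ) + 1) / ε * μ.real {x | ((n : ℝ) + 1) / ε ≤ ‖x‖ ^ 2} ≤ n + 1 := by linarith
    rw [div_mul_eq_mul_div, div_le_iff₀ hε0] at h2
    exact le_of_mul_le_mul_left h2 (by positivity)
  rw [← ofReal_measureReal]
  exact ENNReal.ofReal_le_ofReal hreal

/-- The set whose supremum defines `kappaConst n` is bounded above, so the supremum really is an
upper bound (rather than the default value `0`). -/
theorem sum_sq_le_kappa {n : ℕ} (hn : 0 < n) {μ : Measure (EuclideanSpace ℝ (Fin n))}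
    (hprob : IsProbabilityMeasure μ) (hlc : IsLogConcaveMeasure μ) (hiso : IsIsotropicMeasure μ) :
    ∑ i, ∑ j, (∫ x, x ⟨0, hn⟩ * (x i * x j) ∂μ) ^ 2 ≤ kappaConst n ^ 2 := by
  obtain ⟨C, hC⟩ := exists_norm_cube_bound n
  have hle : hsNorm (Matrix.of fun i j => ∫ x, x ⟨0, hn⟩ * (x i * x j) ∂μ) ≤ kappaConst n := by
    refine le_csSup ⟨√(∑ _i : Fin n, ∑ _j : Fin n, C ^ 2), ?_⟩ ⟨μ, hprob, hlc, hiso, hn, rfl⟩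
    rintro s ⟨ν, hν1, hν2, hν3, h, rfl⟩
    refine Real.sqrt_le_sqrt (Finset.sum_le_sum fun i _ => Finset.sum_le_sum fun j _ => ?_)
    rw [Matrix.of_apply, sq_le_sq]
    exact ((abs_third_le hν1 hν2 _ i j).trans (hC ν hν1 hν2 hν3)).trans (le_abs_self C)
  have h2 := pow_le_pow_left₀ (Real.sqrt_nonneg _) hle 2
  have h3 : hsNorm (Matrix.of fun i j => ∫ x, x ⟨0, hn⟩ * (x i * x j) ∂μ) ^ 2 =
      ∑ i, ∑ j, (∫ x, x ⟨0, hn⟩ * (x i * x j) ∂μ) ^ 2 :=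
    Real.sq_sqrt (Finset.sum_nonneg fun i _ => Finset.sum_nonneg fun j _ => sq_nonneg _)
  rwa [← h3]

/-! ### Linear changes of variables and isotropic position -/

theorem isLogConcaveMeasure_map {n : ℕ} {μ : Measure (EuclideanSpace ℝ (Fin n))}
    (hlc : IsLogConcaveMeasure μ)
    (e : EuclideanSpace ℝ (Fin n) ≃L[ℝ] EuclideanSpace ℝ (Fin n)) :
    IsLogConcaveMeasure (μ.map e) := by
  obtain ⟨p, hpm, hp, rfl⟩ := hlc
  set f : EuclideanSpace ℝ (Fin n) →ₗ[ℝ] EuclideanSpace ℝ (Fin n) :=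
    e.toLinearEquiv.toLinearMap with hf
  have hdet : LinearMap.det f ≠ 0 := (LinearEquiv.isUnit_det' e.toLinearEquiv).ne_zero
  set c : ℝ := |(LinearMap.det f)⁻¹| with hc
  have hc0 : 0 < c := abs_pos.2 (inv_ne_zero hdet)
  have hmap : Measure.map e (volume : Measure (EuclideanSpace ℝ (Fin n))) =
      ENNReal.ofReal c • volume :=
    Measure.map_linearMap_addHaar_eq_smul_addHaar volume hdet
  have hem : Measurable e := e.continuous.measurable
  have hesm : Measurable e.symm := e.symm.continuous.measurable
  refine ⟨fun y => c * p (e.symm y), by fun_prop, ⟨fun y => mul_nonneg hc0.le (hp.1 _), ?_⟩, ?_⟩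
  · intro x y t ht0 ht1
    have h := hp.2 (e.symm x) (e.symm y) t ht0 ht1
    have hcc : c ^ t * c ^ (1 - t) = c := by
      rw [← Real.rpow_add hc0]; simp
    beta_reduce
    rw [Real.mul_rpow hc0.le (hp.1 _), Real.mul_rpow hc0.le (hp.1 _), map_add, map_smul, map_smul]
    calc c ^ t * p (e.symm x) ^ t * (c ^ (1 - t) * p (e.symm y) ^ (1 - t))
        = (c ^ t * c ^ (1 - t)) * (p (e.symm x) ^ t * p (e.symm y) ^ (1 - t)) := by ring
      _ ≤ _ := by rw [hcc]; gcongr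
  · ext s hs
    rw [Measure.map_apply hem hs, withDensity_apply _ (hem hs), withDensity_apply _ hs]
    have h1 : ∫⁻ x in e ⁻¹' s, ENNReal.ofReal (p x) =
        ∫⁻ y in s, ENNReal.ofReal (p (e.symm y)) ∂(Measure.map e volume) := by
      rw [setLIntegral_map hs (by fun_prop) hem]
      simp
    rw [h1, hmap, Measure.restrict_smul, lintegral_smul_measure, smul_eq_mul,
      ← lintegral_const_mul _ (by fun_prop)]
    simp only [ENNReal.ofReal_mul hc0.le]

theorem integral_weight_inner {n : ℕ} {μ : Measure (EuclideanSpace ℝ (Fin n))}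
    (w : EuclideanSpace ℝ (Fin n) → ℝ) (hw : ∀ i j, Integrable (fun x => w x * (x i * x j)) μ)
    (a b : EuclideanSpace ℝ (Fin n)) :
    ∫ x, w x * (⟪x, a⟫ * ⟪x, b⟫) ∂μ =
      ⟪a, Matrix.toEuclideanCLM (𝕜 := ℝ) (Matrix.of fun i j => ∫ x, w x * (x i * x j) ∂μ) b⟫ := by
  have hexp : (fun x : EuclideanSpace ℝ (Fin n) => w x * (⟪x, a⟫ * ⟪x, b⟫)) =
      fun x => ∑ i, ∑ j, (a i * b j) * (w x * (x i * x j)) := by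
    funext x
    simp only [PiLp.inner_apply, RCLike.inner_apply, conj_trivial]
    rw [Finset.sum_mul_sum, Finset.mul_sum]
    refine Finset.sum_congr rfl fun i _ => ?_
    rw [Finset.mul_sum]
    refine Finset.sum_congr rfl fun j _ => ?_
    ring
  rw [hexp, integral_finsetSum _ fun i _ => integrable_finsetSum _ fun j _ =>
    (hw i j).const_mul _, Matrix.inner_toEuclideanCLM]
  simp only [dotProduct, Matrix.mulVec, Matrix.of_apply]
  refine Finset.sum_congr rfl fun i _ => ?_
  rw [integral_finsetSum _ fun j _ => (hw i j).const_mul _, Finset.mul_sum]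
  refine Finset.sum_congr rfl fun j _ => ?_
  rw [integral_const_mul]
  ring

open scoped MatrixOrder in
/-- A positive definite `A` factors as `Tᵀ T` with `T θ` a nonnegative multiple of a prescribed basis
vector: compose the square root of `A` with a reflection. -/
theorem exists_factor {n : ℕ} {A : Matrix (Fin n) (Fin n) ℝ} (hA : A.PosDef)
    (θ : EuclideanSpace ℝ (Fin n)) (i₀ : Fin n) :
    ∃ T : EuclideanSpace ℝ (Fin n) ≃L[ℝ] EuclideanSpace ℝ (Fin n),
      (∀ u v, ⟪T u, T v⟫ = ⟪u, Matrix.toEuclideanCLM (𝕜 := ℝ) A v⟫) ∧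
      T θ = ‖T θ‖ • EuclideanSpace.single i₀ (1 : ℝ) := by
  set C := Matrix.toEuclideanCLM (𝕜 := ℝ) (n := Fin n) (CFC.sqrt A) with hC
  have hCC : ∀ u v, ⟪C u, C v⟫ = ⟪u, Matrix.toEuclideanCLM (𝕜 := ℝ) A v⟫ := by
    intro u v
    have hadj : ContinuousLinearMap.adjoint C = C :=
      ((CFC.sqrt_nonneg A).isSelfAdjoint.map (Matrix.toEuclideanCLM (𝕜 := ℝ) (n := Fin n)))
    rw [← ContinuousLinearMap.adjoint_inner_right, hadj, ← ContinuousLinearMap.comp_apply,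
      ← ContinuousLinearMap.mul_def, hC, ← map_mul,
      CFC.sqrt_mul_sqrt_self _ hA.posSemidef.nonneg]
  set w : EuclideanSpace ℝ (Fin n) := ‖C θ‖ • EuclideanSpace.single i₀ (1 : ℝ) with hw
  have hnorm : ‖C θ‖ = ‖w‖ := by simp [hw, norm_smul]
  set U := (Submodule.span ℝ {C θ - w})ᗮ.reflection with hU
  have hUθ : U (C θ) = w := Submodule.reflection_sub hnorm
  set T₀ : EuclideanSpace ℝ (Fin n) →ₗ[ℝ] EuclideanSpace ℝ (Fin n) :=
    U.toLinearEquiv.toLinearMap ∘ₗ C.toLinearMap with hT₀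
  have hT₀a : ∀ u, T₀ u = U (C u) := fun u => rfl
  have hTT : ∀ u v, ⟪T₀ u, T₀ v⟫ = ⟪u, Matrix.toEuclideanCLM (𝕜 := ℝ) A v⟫ := fun u v => by
    rw [hT₀a, hT₀a, LinearIsometryEquiv.inner_map_map, hCC]
  have hinj : Function.Injective T₀ := by
    rw [injective_iff_map_eq_zero]
    intro u hu
    by_contra hne
    have h1 := hTT u u
    rw [hu, inner_zero_left, Matrix.inner_toEuclideanCLM] at h1
    have h2 := hA.dotProduct_mulVec_pos (x := u.ofLp) (by simpa using hne)
    simp only [star_trivial] at h2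
    linarith
  refine ⟨(LinearEquiv.ofInjectiveEndo T₀ hinj).toContinuousLinearEquiv, hTT, ?_⟩
  show T₀ θ = ‖T₀ θ‖ • _
  rw [hT₀a, LinearIsometryEquiv.norm_map, hUθ]

/-- The Hilbert–Schmidt norm satisfies `‖Tᵀ K T‖ ≤ ‖T‖² ‖K‖`, in squared form. -/
theorem sum_sq_conj_le {n : ℕ} (T K : EuclideanSpace ℝ (Fin n) →L[ℝ] EuclideanSpace ℝ (Fin n))
    {α : ℝ} (hT : ‖T‖ ^ 2 ≤ α) (e : OrthonormalBasis (Fin n) ℝ (EuclideanSpace ℝ (Fin n))) :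
    ∑ i, ∑ k, ⟪T (e i), K (T (e k))⟫ ^ 2 ≤ α ^ 2 * ∑ i, ∑ k, ⟪e i, K (e k)⟫ ^ 2 := by
  have hα : 0 ≤ α := (sq_nonneg _).trans hT
  have hadj : ∀ v, ‖ContinuousLinearMap.adjoint T v‖ ^ 2 ≤ α * ‖v‖ ^ 2 := by
    intro v
    have h := (ContinuousLinearMap.adjoint T).le_opNorm v
    rw [LinearIsometryEquiv.norm_map] at h
    calc _ ≤ (‖T‖ * ‖v‖) ^ 2 := pow_le_pow_left₀ (norm_nonneg _) h 2
      _ = ‖T‖ ^ 2 * ‖v‖ ^ 2 := by ring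
      _ ≤ _ := by gcongr
  have hsum : ∀ v, ∑ i, ⟪e i, v⟫ ^ 2 = ‖v‖ ^ 2 := fun v => by
    rw [← e.sum_sq_norm_inner_right v]; simp
  calc ∑ i, ∑ k, ⟪T (e i), K (T (e k))⟫ ^ 2
      = ∑ k, ∑ i, ⟪e i, ContinuousLinearMap.adjoint T (K (T (e k)))⟫ ^ 2 := by
        rw [Finset.sum_comm]; simp only [ContinuousLinearMap.adjoint_inner_right]
    _ = ∑ k, ‖ContinuousLinearMap.adjoint T (K (T (e k)))‖ ^ 2 := by simp only [hsum]
    _ ≤ ∑ k, α * ‖K (T (e k))‖ ^ 2 := Finset.sum_le_sum fun k _ => hadj _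
    _ = α * ∑ k, ∑ i, ⟪e i, K (T (e k))⟫ ^ 2 := by simp only [hsum, Finset.mul_sum]
    _ = α * ∑ i, ∑ k, ⟪e k, ContinuousLinearMap.adjoint T
          (ContinuousLinearMap.adjoint K (e i))⟫ ^ 2 := by
        rw [Finset.sum_comm]
        simp only [ContinuousLinearMap.adjoint_inner_right]
        simp only [real_inner_comm]
    _ = α * ∑ i, ‖ContinuousLinearMap.adjoint T (ContinuousLinearMap.adjoint K (e i))‖ ^ 2 := by
        simp only [hsum]
    _ ≤ α * ∑ i, α * ‖ContinuousLinearMap.adjoint K (e i)‖ ^ 2 := by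
        gcongr with i _; exact hadj _
    _ = α ^ 2 * ∑ i, ∑ k, ⟪e k, ContinuousLinearMap.adjoint K (e i)⟫ ^ 2 := by
        simp only [hsum, Finset.mul_sum]; simp only [← mul_assoc, sq]
    _ = _ := by
        simp only [ContinuousLinearMap.adjoint_inner_right]
        simp only [real_inner_comm]

theorem covMatrix_eq {n : ℕ} {μ : Measure (EuclideanSpace ℝ (Fin n))}
    (hcent : ∀ i, ∫ x, x i ∂μ = 0) :
    covMatrix μ = Matrix.of fun i j => ∫ x, x i * x j ∂μ := by
  simp [covMatrix, hcent]

theorem inner_covMatrix {n : ℕ} {μ : Measure (EuclideanSpace ℝ (Fin n))}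
    (hprob : IsProbabilityMeasure μ) (hlc : IsLogConcaveMeasure μ)
    (hcent : ∀ i, ∫ x, x i ∂μ = 0) (u v : EuclideanSpace ℝ (Fin n)) :
    ⟪u, Matrix.toEuclideanCLM (𝕜 := ℝ) (covMatrix μ) v⟫ = ∫ x, ⟪x, u⟫ * ⟪x, v⟫ ∂μ := by
  have := integral_weight_inner (μ := μ) (fun _ => 1)
    (fun i j => by simpa using integrable_second hprob hlc i j) u v
  simp only [one_mul] at this
  rw [covMatrix_eq hcent, this]

/-- The covariance is nondegenerate because `μ` is absolutely continuous and so gives no mass to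
hyperplanes. -/
theorem covMatrix_posDef {n : ℕ} {μ : Measure (EuclideanSpace ℝ (Fin n))}
    (hprob : IsProbabilityMeasure μ) (hlc : IsLogConcaveMeasure μ)
    (hcent : ∀ i, ∫ x, x i ∂μ = 0) : (covMatrix μ).PosDef := by
  refine Matrix.PosDef.of_dotProduct_mulVec_pos ?_ fun u₀ hu₀ => ?_
  · rw [covMatrix_eq hcent]
    ext i j
    simp [mul_comm]
  · obtain ⟨u, rfl⟩ : ∃ u : EuclideanSpace ℝ (Fin n), u.ofLp = u₀ := ⟨WithLp.toLp 2 u₀, rfl⟩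
    have hu : u ≠ 0 := by rintro rfl; simp at hu₀
    rw [star_trivial, ← Matrix.inner_toEuclideanCLM, inner_covMatrix hprob hlc hcent]
    have hint : Integrable (fun x : EuclideanSpace ℝ (Fin n) => ⟪x, u⟫ * ⟪x, u⟫) μ := by
      have hexp : (fun x : EuclideanSpace ℝ (Fin n) => ⟪x, u⟫ * ⟪x, u⟫) =
          fun x => ∑ i, ∑ j, (u i * u j) * (x i * x j) := by
        funext x
        simp only [PiLp.inner_apply, RCLike.inner_apply, conj_trivial]
        rw [Finset.sum_mul_sum]
        refine Finset.sum_congr rfl fun i _ => Finset.sum_congr rfl fun j _ => ?_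
        ring
      rw [hexp]
      exact integrable_finsetSum _ fun i _ => integrable_finsetSum _ fun j _ =>
        (integrable_second hprob hlc i j).const_mul _
    have hnn : ∀ x : EuclideanSpace ℝ (Fin n), 0 ≤ ⟪x, u⟫ * ⟪x, u⟫ :=
      fun x => mul_self_nonneg _
    refine lt_of_le_of_ne (integral_nonneg hnn) fun h0 => ?_
    have hae := (integral_eq_zero_iff_of_nonneg hnn hint).1 h0.symm
    have hac : μ ≪ volume := by
      obtain ⟨p, -, -, rfl⟩ := hlc
      exact withDensity_absolutelyContinuous _ _
    have hhyper : μ ((Submodule.span ℝ {u})ᗮ : Set (EuclideanSpace ℝ (Fin n))) = 0 := by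
      refine hac (Measure.addHaar_submodule _ _ fun htop => hu ?_)
      have : u ∈ (Submodule.span ℝ {u})ᗮ := htop ▸ Submodule.mem_top
      rw [Submodule.mem_orthogonal_singleton_iff_inner_right] at this
      exact inner_self_eq_zero.1 this
    have hall : ∀ᵐ x ∂μ, x ∈ ((Submodule.span ℝ {u})ᗮ : Set (EuclideanSpace ℝ (Fin n))) := by
      filter_upwards [hae] with x hx
      rw [SetLike.mem_coe, Submodule.mem_orthogonal_singleton_iff_inner_left]
      exact mul_self_eq_zero.1 hx
    have hnone : ∀ᵐ x ∂μ, x ∉ ((Submodule.span ℝ {u})ᗮ : Set (EuclideanSpace ℝ (Fin n))) :=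
      measure_eq_zero_iff_ae_notMem.1 hhyper
    obtain ⟨x, hx1, hx2⟩ := (hall.and hnone).exists
    exact hx2 hx1

/-- The bound `‖E[⟨X, θ⟩ X ⊗ X]‖_HS² ≤ κₙ² ‖Cov X‖³ ‖θ‖²`, obtained by writing `X = Tᵀ Y` with `Y`
isotropic and `⟨X, θ⟩ = ‖T θ‖ Y₁`. -/
theorem sum_sq_third_le {n : ℕ} (hn : 0 < n) {μ : Measure (EuclideanSpace ℝ (Fin n))}
    (hprob : IsProbabilityMeasure μ) (hlc : IsLogConcaveMeasure μ)
    (hcent : ∀ i, ∫ x, x i ∂μ = 0) (θ : EuclideanSpace ℝ (Fin n)) :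
    ∑ i, ∑ k, (∫ x, ⟪x, θ⟫ * (x i * x k) ∂μ) ^ 2 ≤
      kappaConst n ^ 2 * matOpNorm (covMatrix μ) ^ 3 * ‖θ‖ ^ 2 := by
  set A := Matrix.toEuclideanCLM (𝕜 := ℝ) (covMatrix μ) with hA
  have hAn : matOpNorm (covMatrix μ) = ‖A‖ := rfl
  set i₀ : Fin n := ⟨0, hn⟩ with hi₀
  set e := EuclideanSpace.basisFun (Fin n) ℝ with he
  have hcoord : ∀ (x : EuclideanSpace ℝ (Fin n)) i, ⟪x, e i⟫ = x i := fun x i => by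
    simp [he, EuclideanSpace.inner_single_right]
  obtain ⟨T, hTT, hTθ⟩ := exists_factor (covMatrix_posDef hprob hlc hcent) θ i₀
  set c := ‖T θ‖ with hc
  have hTsq : ∀ u, ‖T u‖ ^ 2 ≤ ‖A‖ * ‖u‖ ^ 2 := fun u => by
    rw [← real_inner_self_eq_norm_sq, hTT]
    calc ⟪u, A u⟫ ≤ ‖u‖ * ‖A u‖ := real_inner_le_norm _ _
      _ ≤ ‖u‖ * (‖A‖ * ‖u‖) := by gcongr; exact A.le_opNorm u
      _ = _ := by ring
  have hTn : ‖(T : EuclideanSpace ℝ (Fin n) →L[ℝ] EuclideanSpace ℝ (Fin n))‖ ^ 2 ≤ ‖A‖ := by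
    have : ‖(T : EuclideanSpace ℝ (Fin n) →L[ℝ] EuclideanSpace ℝ (Fin n))‖ ≤ √‖A‖ := by
      refine ContinuousLinearMap.opNorm_le_bound _ (Real.sqrt_nonneg _) fun u => ?_
      refine le_of_sq_le_sq ?_ (by positivity)
      rw [mul_pow, Real.sq_sqrt (norm_nonneg _)]
      exact hTsq u
    calc _ ≤ √‖A‖ ^ 2 := pow_le_pow_left₀ (norm_nonneg _) this 2
      _ = _ := Real.sq_sqrt (norm_nonneg _)
  -- `W` is the adjoint of `T`, so that `X = W Y` with `Y` isotropic
  set W₀ := ContinuousLinearMap.adjoint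
    (T : EuclideanSpace ℝ (Fin n) →L[ℝ] EuclideanSpace ℝ (Fin n)) with hW₀
  have hW₀inner : ∀ y u, ⟪W₀ y, u⟫ = ⟪y, T u⟫ := fun y u =>
    ContinuousLinearMap.adjoint_inner_left _ _ _
  have hWinj : Function.Injective W₀.toLinearMap := by
    rw [injective_iff_map_eq_zero]
    intro v hv
    have h := hW₀inner v (T.symm v)
    have hv' : W₀ v = 0 := hv
    rw [hv', inner_zero_left, T.apply_symm_apply] at h
    exact inner_self_eq_zero.1 h.symm
  set W := (LinearEquiv.ofInjectiveEndo W₀.toLinearMap hWinj).toContinuousLinearEquiv with hW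
  have hWinner : ∀ y u, ⟪W y, u⟫ = ⟪y, T u⟫ := hW₀inner
  set ν := μ.map W.symm with hν
  have hWsm : Measurable W.symm := W.symm.continuous.measurable
  have hνprob : IsProbabilityMeasure ν := Measure.isProbabilityMeasure_map hWsm.aemeasurable
  have hνlc : IsLogConcaveMeasure ν := isLogConcaveMeasure_map hlc W.symm
  have hchange : ∀ g : EuclideanSpace ℝ (Fin n) → ℝ, ∫ x, g x ∂μ = ∫ y, g (W y) ∂ν := by
    intro g
    have hemb : MeasurableEmbedding W.symm := W.symm.toHomeomorph.measurableEmbedding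
    rw [hν, hemb.integral_map]
    simp
  have hνiso : IsIsotropicMeasure ν := by
    constructor
    · intro i
      have hmean : ∀ u : EuclideanSpace ℝ (Fin n), ∫ x, ⟪x, u⟫ ∂μ = 0 := by
        intro u
        have hint : ∀ i, Integrable (fun x : EuclideanSpace ℝ (Fin n) => u i * x i) μ := fun i => by
          refine Integrable.const_mul ?_ _
          refine ((integrable_const (1 : ℝ)).add (integrable_second hprob hlc i i)).mono'
            (by fun_prop) (Filter.Eventually.of_forall fun x => ?_)
          show |x i| ≤ 1 + x i * x i
          rw [← abs_mul_abs_self (x i)]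
          nlinarith [sq_nonneg (|x i| - 1), abs_nonneg (x i)]
        simp only [PiLp.inner_apply, RCLike.inner_apply, conj_trivial]
        rw [integral_finsetSum _ fun i _ => hint i]
        simp [integral_const_mul, hcent]
      have h := hmean (T.symm (e i))
      rw [hchange] at h
      simpa only [hWinner, T.apply_symm_apply, hcoord] using h
    · intro i j
      have h := inner_covMatrix hprob hlc hcent (T.symm (e i)) (T.symm (e j))
      rw [← hTT, hchange] at h
      simp only [hWinner, T.apply_symm_apply, hcoord] at h
      rw [← h, ← hcoord, orthonormal_iff_ite.1 e.orthonormal i j]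
  set K := Matrix.toEuclideanCLM (𝕜 := ℝ)
    (Matrix.of fun i j => ∫ y, y i₀ * (y i * y j) ∂ν) with hK
  have hKin : ∀ a b, ∫ y, y i₀ * (⟪y, a⟫ * ⟪y, b⟫) ∂ν = ⟪a, K b⟫ :=
    integral_weight_inner (fun y => y i₀) (fun i j => integrable_third hνprob hνlc i₀ i j)
  have hterm : ∀ i k, ∫ x, ⟪x, θ⟫ * (x i * x k) ∂μ = c * ⟪T (e i), K (T (e k))⟫ := by
    intro i k
    rw [← hKin, ← integral_const_mul, hchange]
    congr 1
    funext y
    rw [← hcoord (W y) i, ← hcoord (W y) k, hWinner, hWinner, hWinner, hTθ, inner_smul_right,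
      EuclideanSpace.inner_single_right]
    simp
    ring
  have hkap : ∑ i, ∑ k, ⟪e i, K (e k)⟫ ^ 2 ≤ kappaConst n ^ 2 := by
    simp only [← hKin, hcoord]
    exact sum_sq_le_kappa hn hνprob hνlc hνiso
  have hconj := sum_sq_conj_le
    (T : EuclideanSpace ℝ (Fin n) →L[ℝ] EuclideanSpace ℝ (Fin n)) K hTn e
  simp only [ContinuousLinearEquiv.coe_coe] at hconj
  simp only [hterm, mul_pow, ← Finset.mul_sum]
  rw [hAn]
  calc c ^ 2 * ∑ i, ∑ k, ⟪T (e i), K (T (e k))⟫ ^ 2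
      ≤ (‖A‖ * ‖θ‖ ^ 2) * (‖A‖ ^ 2 * kappaConst n ^ 2) := by
        gcongr
        · exact hTsq θ
        · exact hconj.trans (by gcongr)
    _ = _ := by ring

/-- For a centered log-concave random vector `X`, with `Hᵢ = E[Xᵢ (X ⊗ X)]`, one has
`‖Σᵢ Hᵢ²‖_op ≤ κₙ² ‖Cov(X)‖³_op`. -/
theorem sum_sq_third_moment_bound (n : ℕ) (hn : 1 ≤ n)
    (μ : Measure (EuclideanSpace ℝ (Fin n))) (hprob : IsProbabilityMeasure μ)
    (hlc : IsLogConcaveMeasure μ) (hcent : ∀ i, ∫ x, x i ∂μ = 0) :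
    matOpNorm (∑ i : Fin n, (Matrix.of fun k l => ∫ x, x i * (x k * x l) ∂μ) ^ 2) ≤
      kappaConst n ^ 2 * matOpNorm (covMatrix μ) ^ 3 := by
  set Q := kappaConst n ^ 2 * matOpNorm (covMatrix μ) ^ 3 with hQ
  have hQ0 : 0 ≤ Q := mul_nonneg (sq_nonneg _) (pow_nonneg (norm_nonneg _) 3)
  set H : Fin n → EuclideanSpace ℝ (Fin n) →L[ℝ] EuclideanSpace ℝ (Fin n) := fun i =>
    Matrix.toEuclideanCLM (𝕜 := ℝ) (Matrix.of fun k l => ∫ x, x i * (x k * x l) ∂μ) with hH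
  have hHin : ∀ i a b, ⟪a, H i b⟫ = ∫ x, x i * (⟪x, a⟫ * ⟪x, b⟫) ∂μ := fun i a b =>
    (integral_weight_inner (fun x => x i) (fun j k => integrable_third hprob hlc i j k) a b).symm
  have hsym : ∀ i a b, ⟪H i a, b⟫ = ⟪a, H i b⟫ := fun i a b => by
    rw [real_inner_comm, hHin, hHin]
    simp only [mul_comm]
  have hsum : ∀ θ, ∑ i, ‖H i θ‖ ^ 2 ≤ Q * ‖θ‖ ^ 2 := by
    intro θ
    refine le_trans (le_of_eq ?_) (sum_sq_third_le hn hprob hlc hcent θ)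
    refine Finset.sum_congr rfl fun i _ => ?_
    rw [← (EuclideanSpace.basisFun (Fin n) ℝ).sum_sq_norm_inner_right]
    refine Finset.sum_congr rfl fun k _ => ?_
    rw [Real.norm_eq_abs, sq_abs, hHin]
    congr 2
    funext x
    simp [EuclideanSpace.inner_single_right]
    ring
  set S := ∑ i, H i * H i with hS
  have hSM : matOpNorm (∑ i : Fin n, (Matrix.of fun k l => ∫ x, x i * (x k * x l) ∂μ) ^ 2) =
      ‖S‖ := by
    show ‖Matrix.toEuclideanCLM (n := Fin n) (𝕜 := ℝ)
      (∑ i : Fin n, (Matrix.of fun k l => ∫ x, x i * (x k * x l) ∂μ) ^ 2)‖ = _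
    rw [map_sum, hS]
    simp only [hH, sq, map_mul]
  rw [hSM]
  refine ContinuousLinearMap.opNorm_le_bound _ hQ0 fun θ => ?_
  have hbil : ∀ φ, ⟪S θ, φ⟫ ≤ Q * ‖θ‖ * ‖φ‖ := by
    intro φ
    calc ⟪S θ, φ⟫ = ∑ i, ⟪H i θ, H i φ⟫ := by
          rw [hS, sum_apply, sum_inner]
          refine Finset.sum_congr rfl fun i _ => ?_
          rw [← hsym]; rfl
      _ ≤ ∑ i, ‖H i θ‖ * ‖H i φ‖ := Finset.sum_le_sum fun i _ => real_inner_le_norm _ _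
      _ ≤ √(∑ i, ‖H i θ‖ ^ 2) * √(∑ i, ‖H i φ‖ ^ 2) := Real.sum_mul_le_sqrt_mul_sqrt _ _ _
      _ ≤ √(Q * ‖θ‖ ^ 2) * √(Q * ‖φ‖ ^ 2) := by
          gcongr
          · exact hsum θ
          · exact hsum φ
      _ = Q * ‖θ‖ * ‖φ‖ := by
          rw [Real.sqrt_mul hQ0, Real.sqrt_mul hQ0, Real.sqrt_sq (norm_nonneg _),
            Real.sqrt_sq (norm_nonneg _)]
          nth_rewrite 3 [← Real.mul_self_sqrt hQ0]
          ring
  have h := hbil (S θ)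
  rw [real_inner_self_eq_norm_mul_norm] at h
  rcases (norm_nonneg (S θ)).eq_or_lt with h0 | h0
  · rw [← h0]; positivity
  · exact le_of_mul_le_mul_right h h0

end
end

section
/- Let n ≥ 1 and let X be a centered, log-concave random vector in ℝⁿ. For θ in the unit sphere S^{n-1} define H_θ = E[⟨X,θ⟩·(X⊗X)] ∈ ℝ^{n×n}. Then ‖H_θ‖_op² ≤ 9·‖Cov(X)‖_op³, where ‖·‖_op is the operator norm and Cov(X) is the covariance matrix of X. -/
/-!
Write `s = √‖Cov X‖` and `Y_a = ⟨a, X⟩`. The heart of the matter is one-dimensional: a centred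
real random variable with log-concave density `g` and variance `σ²` satisfies `E Y³ ≤ 2 σ³`
(`LogConcaveLine.third_moment_le`), with equality for the centred exponential density
`e(x) = σ⁻¹ exp (-(x + σ) / σ)`, `x > -σ`. Indeed `g` and `e` have the same mass, mean and variance.
Since `log e` is affine on `(-σ, ∞)` and `log g` is concave, `{g ≥ e}` is an interval there, with
endpoints `p ≤ q` say, so `(x + σ)(x - p)(x - q)(g - e) ≤ 0` everywhere. Integrating this, only the
cubic term survives and it equals `E Y³ - 2 σ³`.

The marginal `Y_u`, `‖u‖ = 1`, has a log-concave density by the Prékopa–Leindler inequality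
(`prekopaLeindler_pi`, `exists_marginal_density`), which is obtained from the one-dimensional
Brunn–Minkowski inequality, the layer-cake formula and induction on the dimension. Hence
`|E Y_a³| ≤ 2 s³ ‖a‖³` for every vector `a`.

Two polarizations finish the proof. For unit `θ` and `u` and `y = θ / 2`,
`3 E Y_θ Y_u² = E Y_{y+u}³ + E Y_{y-u}³ - 2 E Y_y³`. As `‖y ± u‖ ≤ 3/2` and
`‖y + u‖² + ‖y - u‖² = 5/2`, the right-hand side is at most `2 s³ (15/4 + 1/4) = 8 s³`, so that
`|E Y_θ Y_u²| ≤ 3 s³`. Since `⟨v, H_θ u⟩ = E Y_θ Y_v Y_u` is symmetric in `u` and `v`, polarizing once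
more gives `‖H_θ‖ ≤ 3 s³`.
-/

open MeasureTheory Real Pointwise RealInnerProductSpace
open scoped ENNReal

noncomputable section

/-! ### The Prékopa–Leindler inequality -/

/-- The measure `μ` satisfies the Prékopa–Leindler inequality: if `h (t x + (1 - t) y)` dominates
`f(x)^t g(y)^(1-t)` pointwise, then `∫ h ≥ (∫ f)^t (∫ g)^(1-t)`. The functions take values in
`[0, ∞]`, so no integrability is assumed. -/
def PrekopaLeindler {E : Type*} [AddCommGroup E] [Module ℝ E] [MeasurableSpace E]
    (μ : Measure E) : Prop :=
  ∀ t : ℝ, 0 < t → t < 1 → ∀ f g h : E → ℝ≥0∞, Measurable f → Measurable g → Measurable h →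
    (∀ x y, f x ^ t * g y ^ (1 - t) ≤ h (t • x + (1 - t) • y)) →
    (∫⁻ x, f x ∂μ) ^ t * (∫⁻ x, g x ∂μ) ^ (1 - t) ≤ ∫⁻ x, h x ∂μ

/-- One-dimensional Brunn–Minkowski for compact sets: `t A + (1 - t) B` contains the translates
`t A + (1 - t) min B` and `t max A + (1 - t) B`, which share just one point. -/
theorem volume_convexComb_compact {A B : Set ℝ} (hA : IsCompact A) (hB : IsCompact B)
    (hA0 : A.Nonempty) (hB0 : B.Nonempty) {t : ℝ} (ht0 : 0 < t) (ht1 : t < 1) :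
    ENNReal.ofReal t * volume A + ENNReal.ofReal (1 - t) * volume B ≤
      volume (t • A + (1 - t) • B) := by
  obtain ⟨b, hb, hbmin⟩ := hB.exists_isLeast hB0
  obtain ⟨a, ha, hamax⟩ := hA.exists_isGreatest hA0
  have h1t : 0 < 1 - t := by linarith
  set A' : Set ℝ := (fun x => (1 - t) * b + x) '' (t • A) with hA'
  set B' : Set ℝ := (fun x => t * a + x) '' ((1 - t) • B) with hB'
  have vA : volume A' = ENNReal.ofReal t * volume A := by
    rw [hA', Set.image_add_left, measure_preimage_add, Measure.addHaar_smul]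
    simp [abs_of_pos ht0]
  have vB : volume B' = ENNReal.ofReal (1 - t) * volume B := by
    rw [hB', Set.image_add_left, measure_preimage_add, Measure.addHaar_smul]
    simp [abs_of_pos h1t]
  have hBm : MeasurableSet B' :=
    ((hB.smul (1 - t)).image (by fun_prop)).measurableSet
  have hdis : AEDisjoint volume A' B' := by
    refine measure_mono_null (t := {t * a + (1 - t) * b}) ?_ (by simp)
    rintro z ⟨⟨_, ⟨x, hx, rfl⟩, rfl⟩, ⟨_, ⟨y, hy, rfl⟩, hz⟩⟩
    simp only [smul_eq_mul, Set.mem_singleton_iff] at hz ⊢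
    have h1 := mul_le_mul_of_nonneg_left (hamax hx) ht0.le
    have h2 := mul_le_mul_of_nonneg_left (hbmin hy) h1t.le
    linarith
  rw [← vA, ← vB, ← measure_union₀ hBm.nullMeasurableSet hdis]
  refine measure_mono (Set.union_subset ?_ ?_)
  · rintro _ ⟨x, hx, rfl⟩
    exact ⟨x, hx, (1 - t) * b, ⟨b, hb, rfl⟩, add_comm _ _⟩
  · rintro _ ⟨y, hy, rfl⟩
    exact ⟨t * a, ⟨a, ha, rfl⟩, y, hy, rfl⟩

/-- One-dimensional Brunn–Minkowski for measurable sets, by inner regularity. A superset `C` stands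
in for `t A + (1 - t) B`, which need not be measurable. -/
theorem volume_convexComb {A B C : Set ℝ} (hA : MeasurableSet A) (hB : MeasurableSet B)
    (hA0 : A.Nonempty) (hB0 : B.Nonempty) {t : ℝ} (ht0 : 0 < t) (ht1 : t < 1)
    (hC : ∀ x ∈ A, ∀ y ∈ B, t * x + (1 - t) * y ∈ C) :
    ENNReal.ofReal t * volume A + ENNReal.ofReal (1 - t) * volume B ≤ volume C := by
  have key : ∀ {S : Set ℝ}, MeasurableSet S → S.Nonempty →
      volume S = ⨆ K : {K : Set ℝ // K ⊆ S ∧ IsCompact K ∧ K.Nonempty}, volume K.1 := by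
    intro S hS hS0
    refine le_antisymm ?_ (iSup_le fun K => measure_mono K.2.1)
    refine le_of_forall_lt fun r hr => ?_
    obtain ⟨K, hKS, hK, hrK⟩ := hS.exists_lt_isCompact hr
    have hK0 : K.Nonempty := by
      rw [Set.nonempty_iff_ne_empty]; rintro rfl; simp at hrK
    exact hrK.trans_le
      (le_iSup (fun K : {K : Set ℝ // K ⊆ S ∧ IsCompact K ∧ K.Nonempty} => volume K.1)
        ⟨K, hKS, hK, hK0⟩)
  obtain ⟨a, ha⟩ := hA0
  obtain ⟨b, hb⟩ := hB0
  have : Nonempty {K : Set ℝ // K ⊆ A ∧ IsCompact K ∧ K.Nonempty} :=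
    ⟨⟨{a}, by simpa using ha, isCompact_singleton, by simp⟩⟩
  have : Nonempty {K : Set ℝ // K ⊆ B ∧ IsCompact K ∧ K.Nonempty} :=
    ⟨⟨{b}, by simpa using hb, isCompact_singleton, by simp⟩⟩
  rw [key hA ⟨a, ha⟩, key hB ⟨b, hb⟩, ENNReal.mul_iSup, ENNReal.mul_iSup]
  refine ENNReal.iSup_add_iSup_le fun K L => ?_
  refine (volume_convexComb_compact K.2.2.1 L.2.2.1 K.2.2.2 L.2.2.2 ht0 ht1).trans
    (measure_mono ?_)
  rintro _ ⟨_, ⟨x, hx, rfl⟩, _, ⟨y, hy, rfl⟩, rfl⟩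
  exact hC x (K.2.1 hx) y (L.2.1 hy)

theorem ennreal_geom_le_arith {t : ℝ} (ht0 : 0 < t) (ht1 : t < 1) (a b : ℝ≥0∞) :
    a ^ t * b ^ (1 - t) ≤ ENNReal.ofReal t * a + ENNReal.ofReal (1 - t) * b := by
  have h1t : 0 < 1 - t := by linarith
  have hpq : (t⁻¹).HolderConjugate (1 - t)⁻¹ := by
    rw [Real.holderConjugate_iff]
    exact ⟨(one_lt_inv₀ ht0).2 ht1, by simp⟩
  have := ENNReal.young_inequality (a ^ t) (b ^ (1 - t)) hpq
  rw [← ENNReal.rpow_mul, ← ENNReal.rpow_mul, mul_inv_cancel₀ ht0.ne', mul_inv_cancel₀ h1t.ne',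
    ENNReal.rpow_one, ENNReal.rpow_one, ENNReal.ofReal_inv_of_pos ht0,
    ENNReal.ofReal_inv_of_pos h1t, div_eq_mul_inv, div_eq_mul_inv, inv_inv, inv_inv,
    mul_comm a, mul_comm b] at this
  exact this

/-- The layer-cake formula for a `[0, 1]`-valued function with values in `ℝ≥0∞`. -/
theorem lintegral_eq_lintegral_meas_lt_ennreal {f : ℝ → ℝ≥0∞} (hf : Measurable f)
    (hf1 : ∀ x, f x ≤ 1) :
    ∫⁻ x, f x = ∫⁻ l in Set.Ioi (0 : ℝ), volume {x | ENNReal.ofReal l < f x} := by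
  have hfin : ∀ x, f x ≠ ∞ := fun x => ne_top_of_le_ne_top ENNReal.one_ne_top (hf1 x)
  have := lintegral_eq_lintegral_meas_lt (volume : Measure ℝ) (f := fun x => (f x).toReal)
    (Filter.Eventually.of_forall fun x => ENNReal.toReal_nonneg) hf.ennreal_toReal.aemeasurable
  simp only [ENNReal.ofReal_toReal (hfin _)] at this
  rw [this]
  refine setLIntegral_congr_fun measurableSet_Ioi fun l hl => ?_
  congr 1
  ext x
  exact (ENNReal.ofReal_lt_iff_lt_toReal (le_of_lt hl) (hfin x)).symm

/-- Prékopa–Leindler on the line when `f` and `g` have supremum `1`. The superlevel sets of `f` and `g`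
at each level `l < 1` are then nonempty, so Brunn–Minkowski applies to them; integrating over `l`
yields the stronger bound with the arithmetic mean on the left. -/
theorem prekopaLeindler_real_of_iSup_eq_one {t : ℝ} (ht0 : 0 < t) (ht1 : t < 1)
    {f g h : ℝ → ℝ≥0∞} (hf : Measurable f) (hg : Measurable g) (hh : Measurable h)
    (hf1 : ⨆ x, f x = 1) (hg1 : ⨆ x, g x = 1)
    (H : ∀ x y, f x ^ t * g y ^ (1 - t) ≤ h (t * x + (1 - t) * y)) :
    (∫⁻ x, f x) ^ t * (∫⁻ x, g x) ^ (1 - t) ≤ ∫⁻ x, h x := by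
  have h1t : 0 < 1 - t := by linarith
  refine (ennreal_geom_le_arith ht0 ht1 _ _).trans ?_
  have hfle : ∀ x, f x ≤ 1 := fun x => hf1 ▸ le_iSup f x
  have hgle : ∀ x, g x ≤ 1 := fun x => hg1 ▸ le_iSup g x
  refine le_trans ?_ (lintegral_mono (fun x => min_le_left (h x) 1))
  rw [lintegral_eq_lintegral_meas_lt_ennreal hf hfle,
    lintegral_eq_lintegral_meas_lt_ennreal hg hgle,
    lintegral_eq_lintegral_meas_lt_ennreal (hh.min measurable_const) (fun x => min_le_right _ _),
    ← lintegral_const_mul' _ _ ENNReal.ofReal_ne_top, ← lintegral_const_mul' _ _ ENNReal.ofReal_ne_top,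
    ← lintegral_add_left']
  · refine setLIntegral_mono' measurableSet_Ioi fun l hl => ?_
    rcases lt_or_ge l 1 with hl1 | hl1
    · have hl1' : ENNReal.ofReal l < 1 := by simpa using hl1
      refine volume_convexComb (hf measurableSet_Ioi) (hg measurableSet_Ioi) ?_ ?_ ht0 ht1 ?_
      · exact lt_iSup_iff.1 (hf1 ▸ hl1')
      · exact lt_iSup_iff.1 (hg1 ▸ hl1')
      · intro x hx y hy
        refine lt_min (lt_of_lt_of_le ?_ (H x y)) hl1'
        calc ENNReal.ofReal l = ENNReal.ofReal l ^ t * ENNReal.ofReal l ^ (1 - t) := by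
              rw [← ENNReal.rpow_add_of_nonneg _ _ ht0.le h1t.le]; simp
          _ < _ := ENNReal.mul_lt_mul (ENNReal.rpow_lt_rpow hx ht0) (ENNReal.rpow_lt_rpow hy h1t)
    · have hl1' : 1 ≤ ENNReal.ofReal l := by simpa using hl1
      have e1 : {x | ENNReal.ofReal l < f x} = ∅ := by
        ext x; simpa using (hfle x).trans hl1'
      have e2 : {x | ENNReal.ofReal l < g x} = ∅ := by
        ext x; simpa using (hgle x).trans hl1'
      simp [e1, e2]
  · refine (Antitone.measurable fun a b hab => ?_).aemeasurable
    gcongr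

theorem prekopaLeindler_real : PrekopaLeindler (volume : Measure ℝ) := by
  intro t ht0 ht1 f g h hf hg hh H
  have h1t : 0 < 1 - t := by linarith
  -- Truncation at height `N` makes the suprema `a`, `b` finite, and division by them reduces to
  -- functions of supremum `1`.
  have bdd : ∀ N : ℕ, (∫⁻ x, min (f x) N) ^ t * (∫⁻ x, min (g x) N) ^ (1 - t) ≤ ∫⁻ x, h x := by
    intro N
    set F : ℝ → ℝ≥0∞ := fun x => min (f x) N with hF
    set G : ℝ → ℝ≥0∞ := fun x => min (g x) N with hG
    have hFm : Measurable F := hf.min measurable_const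
    have hGm : Measurable G := hg.min measurable_const
    set a := ⨆ x, F x with ha
    set b := ⨆ x, G x with hb
    have hat : a ≠ ∞ := ne_top_of_le_ne_top (ENNReal.natCast_ne_top N)
      (iSup_le fun x => min_le_right _ _)
    have hbt : b ≠ ∞ := ne_top_of_le_ne_top (ENNReal.natCast_ne_top N)
      (iSup_le fun x => min_le_right _ _)
    by_cases ha0 : a = 0
    · have : ∫⁻ x, F x = 0 := by
        rw [lintegral_congr (g := fun _ => 0) fun x => le_zero_iff.1 (ha0 ▸ le_iSup F x)]; simp
      rw [this, ENNReal.zero_rpow_of_pos ht0]; simp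
    by_cases hb0 : b = 0
    · have : ∫⁻ x, G x = 0 := by
        rw [lintegral_congr (g := fun _ => 0) fun x => le_zero_iff.1 (hb0 ▸ le_iSup G x)]; simp
      rw [this, ENNReal.zero_rpow_of_pos h1t]; simp
    have hc0 : a ^ t * b ^ (1 - t) ≠ 0 := by
      simp [ENNReal.rpow_eq_zero_iff, ha0, hb0, hat, hbt]
    have hct : a ^ t * b ^ (1 - t) ≠ ∞ :=
      ENNReal.mul_ne_top (ENNReal.rpow_ne_top_of_nonneg ht0.le hat)
        (ENNReal.rpow_ne_top_of_nonneg h1t.le hbt)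
    have hinv : (a ^ t * b ^ (1 - t))⁻¹ = a⁻¹ ^ t * b⁻¹ ^ (1 - t) := by
      rw [ENNReal.inv_rpow, ENNReal.inv_rpow, ENNReal.mul_inv]
      · right; exact ENNReal.rpow_ne_top_of_nonneg h1t.le hbt
      · left; exact ENNReal.rpow_ne_top_of_nonneg ht0.le hat
    have := prekopaLeindler_real_of_iSup_eq_one ht0 ht1 (f := fun x => a⁻¹ * F x)
      (g := fun x => b⁻¹ * G x) (h := fun x => (a ^ t * b ^ (1 - t))⁻¹ * h x)
      (hFm.const_mul _) (hGm.const_mul _) (hh.const_mul _)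
      (by rw [← ENNReal.mul_iSup, ← ha, ENNReal.inv_mul_cancel ha0 hat])
      (by rw [← ENNReal.mul_iSup, ← hb, ENNReal.inv_mul_cancel hb0 hbt])
      (by
        intro x y
        rw [ENNReal.mul_rpow_of_nonneg _ _ ht0.le, ENNReal.mul_rpow_of_nonneg _ _ h1t.le,
          mul_mul_mul_comm, hinv]
        gcongr
        refine le_trans ?_ (H x y)
        gcongr
        · exact min_le_left _ _
        · exact min_le_left _ _)
    rw [lintegral_const_mul _ hFm, lintegral_const_mul _ hGm, lintegral_const_mul _ hh,
      ENNReal.mul_rpow_of_nonneg _ _ ht0.le, ENNReal.mul_rpow_of_nonneg _ _ h1t.le,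
      mul_mul_mul_comm, ← hinv] at this
    exact (ENNReal.mul_le_mul_iff_right (ENNReal.inv_ne_zero.2 hct)
      (ENNReal.inv_ne_top.2 hc0)).1 this
  have conv : ∀ {k : ℝ → ℝ≥0∞}, Measurable k →
      Filter.Tendsto (fun N : ℕ => ∫⁻ x, min (k x) N) Filter.atTop (nhds (∫⁻ x, k x)) := by
    intro k hk
    refine lintegral_tendsto_of_tendsto_of_monotone
      (fun N => (hk.min measurable_const).aemeasurable) ?_ ?_
    · refine Filter.Eventually.of_forall fun x M N hMN => ?_
      exact min_le_min le_rfl (by exact_mod_cast hMN)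
    · refine Filter.Eventually.of_forall fun x => ?_
      have : Filter.Tendsto (fun N : ℕ => min (k x) (N : ℝ≥0∞)) Filter.atTop
          (nhds (min (k x) ∞)) := tendsto_const_nhds.min ENNReal.tendsto_nat_nhds_top
      simpa using this
  by_cases hf0 : ∫⁻ x, f x = 0
  · rw [hf0, ENNReal.zero_rpow_of_pos ht0]; simp
  by_cases hg0 : ∫⁻ x, g x = 0
  · rw [hg0, ENNReal.zero_rpow_of_pos h1t]; simp
  refine le_of_tendsto (ENNReal.Tendsto.mul ((conv hf).ennrpow_const t) ?_
    ((conv hg).ennrpow_const (1 - t)) ?_) (Filter.Eventually.of_forall bdd)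
  · left; simp [ENNReal.rpow_eq_zero_iff, hf0, ht0, ht0.not_gt]
  · left; simp [ENNReal.rpow_eq_zero_iff, hg0, h1t, ht1.not_gt]

/-- Tensorization: the inequality for `ν` shows that the fibre integrals of `f`, `g`, `h` satisfy the
hypothesis of the inequality for `μ`. -/
theorem PrekopaLeindler.prod {E F : Type*} [AddCommGroup E] [Module ℝ E] [MeasurableSpace E]
    [AddCommGroup F] [Module ℝ F] [MeasurableSpace F] {μ : Measure E} {ν : Measure F}
    [SFinite ν] (hμ : PrekopaLeindler μ) (hν : PrekopaLeindler ν) :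
    PrekopaLeindler (μ.prod ν) := by
  intro t ht0 ht1 f g h hf hg hh H
  rw [lintegral_prod _ hf.aemeasurable, lintegral_prod _ hg.aemeasurable,
    lintegral_prod _ hh.aemeasurable]
  refine hμ t ht0 ht1 _ _ _ hf.lintegral_prod_right' hg.lintegral_prod_right'
    hh.lintegral_prod_right' fun x y => ?_
  exact hν t ht0 ht1 _ _ _ (hf.comp measurable_prodMk_left) (hg.comp measurable_prodMk_left)
    (hh.comp measurable_prodMk_left) fun x' y' => H (x, x') (y, y')

theorem prekopaLeindler_pi (m : ℕ) : PrekopaLeindler (volume : Measure (Fin m → ℝ)) := by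
  induction m with
  | zero =>
    intro t ht0 ht1 f g h hf hg hh H
    simp only [Measure.volume_pi_eq_dirac (0 : Fin 0 → ℝ), lintegral_dirac]
    convert H 0 0
  | succ m ih =>
    intro t ht0 ht1 f g h hf hg hh H
    have hP := (prekopaLeindler_real.prod ih) t ht0 ht1
    set e := MeasurableEquiv.piFinSuccAbove (fun _ : Fin (m + 1) => ℝ) 0 with he
    have hmp := (volume_preserving_piFinSuccAbove (fun _ : Fin (m + 1) => ℝ) 0).symm
    have key : ∀ k : (Fin (m + 1) → ℝ) → ℝ≥0∞,
        ∫⁻ z, k (e.symm z) ∂((volume : Measure ℝ).prod (volume : Measure (Fin m → ℝ))) =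
          ∫⁻ x, k x := fun k => hmp.lintegral_comp_emb e.symm.measurableEmbedding k
    rw [← key f, ← key g, ← key h]
    refine hP _ _ _ (hf.comp e.symm.measurable) (hg.comp e.symm.measurable)
      (hh.comp e.symm.measurable) fun x y => ?_
    convert H (e.symm x) (e.symm y) using 2
    ext i
    refine Fin.cases ?_ (fun j => ?_) i
    · simp [he, MeasurableEquiv.piFinSuccAbove]
    · simp [he, MeasurableEquiv.piFinSuccAbove]

/-! ### Third moments of log-concave densities on the line -/

/-- A log-concave function on the line, not necessarily normalized. -/
structure LogConcaveLine (g : ℝ → ℝ) : Prop where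
  nonneg : ∀ x, 0 ≤ g x
  le : ∀ x y t : ℝ, 0 < t → t < 1 → g x ^ t * g y ^ (1 - t) ≤ g (t * x + (1 - t) * y)

theorem LogConcaveLine.comp_neg {g : ℝ → ℝ} (hg : LogConcaveLine g) :
    LogConcaveLine fun x => g (-x) where
  nonneg x := hg.nonneg _
  le x y t h0 h1 := by
    convert hg.le (-x) (-y) t h0 h1 using 2
    ring

/-- An integrable log-concave function decays exponentially at `+∞`: once it has dropped from `g a`
to below `g a / 2` at `b`, concavity of `log g` forces at least this rate of decay afterwards. -/
theorem LogConcaveLine.exp_tail {g : ℝ → ℝ} (hg : LogConcaveLine g) (hi : Integrable g)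
    (h1 : ∫ x, g x ≠ 0) :
    ∃ A c R : ℝ, 0 < c ∧ 0 < R ∧ ∀ x, R < x → g x ≤ A * exp (-(c * x)) := by
  obtain ⟨a, ha⟩ : ∃ a, 0 < g a := by
    by_contra! h
    exact h1 (by simp [funext fun x => le_antisymm (h x) (hg.nonneg x)])
  obtain ⟨b, hab, hb⟩ : ∃ b, a < b ∧ g b < g a / 2 := by
    by_contra! h
    have h2 : IntegrableOn (fun _ : ℝ => g a / 2) (Set.Ioi a) := by
      refine Integrable.mono' hi.integrableOn (by fun_prop) ?_
      filter_upwards [ae_restrict_mem measurableSet_Ioi] with x hx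
      rw [Real.norm_of_nonneg (by positivity)]
      exact h x hx
    rw [integrableOn_const_iff] at h2
    rcases h2 with h2 | h2
    · rw [enorm_eq_zero] at h2; linarith
    · simp at h2
  have hba : 0 < b - a := by linarith
  refine ⟨g a * exp (log 2 / (b - a) * a), log 2 / (b - a), max b 1, by positivity, by positivity,
    fun x hx => ?_⟩
  have hxb : b < x := (le_max_left _ _).trans_lt hx
  have hxa : 0 < x - a := by linarith
  rcases (hg.nonneg x).eq_or_lt with h0 | h0
  · rw [← h0]; positivity
  -- `b` is the convex combination of `x` and `a` with weight `s` on `x`.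
  set s := (b - a) / (x - a) with hs
  have hs0 : 0 < s := by positivity
  have hs1 : s < 1 := by rw [hs, div_lt_one hxa]; linarith
  have key := hg.le x a s hs0 hs1
  have hcomb : s * x + (1 - s) * a = b := by rw [hs]; field_simp; ring
  rw [hcomb] at key
  have h3 : s * log (g x) + (1 - s) * log (g a) ≤ log (g a) - log 2 := by
    rw [← log_rpow h0, ← log_rpow ha, ← log_mul (by positivity) (by positivity),
      ← log_div (by positivity) (by positivity)]
    exact log_le_log (by positivity) (key.trans hb.le)
  have h4 : log (g x) ≤ log (g a) - log 2 / s := by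
    have : s * log (g x) ≤ s * (log (g a) - log 2 / s) := by
      rw [mul_sub, mul_div_cancel₀ _ hs0.ne']; linarith
    exact le_of_mul_le_mul_left this hs0
  rw [← exp_log h0]
  nth_rewrite 1 [← exp_log ha]
  rw [← exp_add, ← exp_add, exp_le_exp]
  refine h4.trans (le_of_eq ?_)
  rw [hs]; field_simp; ring

theorem LogConcaveLine.integrableOn_Ioi {g : ℝ → ℝ} (hg : LogConcaveLine g) (hi : Integrable g)
    (h1 : ∫ x, g x ≠ 0) (k : ℕ) : IntegrableOn (fun x => x ^ k * g x) (Set.Ioi 0) := by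
  obtain ⟨A, c, R, hc, hR, h⟩ := hg.exp_tail hi h1
  rw [← Set.Ioc_union_Ioi_eq_Ioi hR.le]
  refine IntegrableOn.union ?_ ?_
  · refine Integrable.mono' (hi.integrableOn.const_mul (R ^ k))
      ((by fun_prop : Continuous fun x : ℝ => x ^ k).aestronglyMeasurable.mul
        hi.aestronglyMeasurable.restrict) ?_
    filter_upwards [ae_restrict_mem measurableSet_Ioc] with x hx
    rw [norm_mul, Real.norm_of_nonneg (hg.nonneg x), Real.norm_of_nonneg (pow_nonneg hx.1.le _)]
    exact mul_le_mul_of_nonneg_right (pow_le_pow_left₀ hx.1.le hx.2 _) (hg.nonneg x)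
  · have h2 := (integrableOn_rpow_mul_exp_neg_mul_rpow (s := k) (p := 1) (b := c)
      (by have : (0 : ℝ) ≤ k := by positivity
          linarith) one_pos hc)
    refine Integrable.mono' ((h2.mono_set (Set.Ioi_subset_Ioi hR.le)).const_mul A)
      ((by fun_prop : Continuous fun x : ℝ => x ^ k).aestronglyMeasurable.mul
        hi.aestronglyMeasurable.restrict) ?_
    filter_upwards [ae_restrict_mem measurableSet_Ioi] with x hx
    have hx0 : 0 < x := hR.trans hx
    rw [norm_mul, Real.norm_of_nonneg (hg.nonneg x), Real.norm_of_nonneg (pow_nonneg hx0.le _),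
      rpow_natCast, rpow_one, mul_left_comm]
    exact mul_le_mul_of_nonneg_left (by simpa using h x hx) (by positivity)

theorem LogConcaveLine.integrable_pow {g : ℝ → ℝ} (hg : LogConcaveLine g) (hi : Integrable g)
    (h1 : ∫ x, g x ≠ 0) (k : ℕ) : Integrable (fun x => x ^ k * g x) := by
  have hp := hg.integrableOn_Ioi hi h1 k
  have hn := hg.comp_neg.integrableOn_Ioi hi.comp_neg (by rwa [integral_neg_eq_self]) k
  rw [← integrableOn_univ, ← Set.Iic_union_Ioi (a := (0 : ℝ))]
  refine IntegrableOn.union ?_ hp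
  rw [← integrableOn_Ici_iff_integrableOn_Ioi] at hn
  have h3 := hn.comp_neg
  simp only [Set.neg_Ici, neg_zero, neg_neg] at h3
  have h4 := h3.const_mul ((-1) ^ k)
  refine h4.congr (Filter.Eventually.of_forall fun x => ?_)
  simp only
  rw [← mul_assoc, ← mul_pow]; simp

/-- The density of the centred exponential distribution with standard deviation `σ`, supported on
`(-σ, ∞)`. -/
def expDensity (σ x : ℝ) : ℝ := (Set.Ioi (-σ)).indicator (fun x => σ⁻¹ * exp (-(σ⁻¹ * (x + σ)))) x

theorem expDensity_moment {σ : ℝ} (hσ : 0 < σ) (k : ℕ) :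
    Integrable (fun x => (x + σ) ^ k * expDensity σ x) ∧
      ∫ x, (x + σ) ^ k * expDensity σ x = k.factorial * σ ^ k := by
  have hfun : (fun x => (x + σ) ^ k * expDensity σ x) = fun x =>
      (fun y => (Set.Ioi (0 : ℝ)).indicator (fun y => σ⁻¹ * (y ^ (k : ℝ) * exp (-(σ⁻¹ * y)))) y)
        (x + σ) := by
    funext x
    by_cases hx : -σ < x
    · have : 0 < x + σ := by linarith
      simp [expDensity, Set.indicator, hx, this]; ring
    · have : ¬ 0 < x + σ := by linarith
      simp [expDensity, Set.indicator, hx, this]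
  rw [hfun]
  have hk : (-1 : ℝ) < k := by have : (0 : ℝ) ≤ k := by positivity
                               linarith
  constructor
  · refine Integrable.comp_add_right (f := fun y => (Set.Ioi (0 : ℝ)).indicator
      (fun y => σ⁻¹ * (y ^ (k : ℝ) * exp (-(σ⁻¹ * y)))) y) ?_ σ
    rw [integrable_indicator_iff measurableSet_Ioi]
    have := (integrableOn_rpow_mul_exp_neg_mul_rpow (s := k) (p := 1) (b := σ⁻¹) hk one_pos
      (by positivity)).const_mul σ⁻¹
    simpa [IntegrableOn] using this
  · rw [integral_add_right_eq_self (fun y => (Set.Ioi (0 : ℝ)).indicator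
      (fun y => σ⁻¹ * (y ^ (k : ℝ) * exp (-(σ⁻¹ * y)))) y) σ, integral_indicator measurableSet_Ioi,
      integral_const_mul]
    have := Real.integral_rpow_mul_exp_neg_mul_Ioi (a := k + 1) (r := σ⁻¹) (by positivity)
      (by positivity)
    simp only [add_sub_cancel_right] at this
    rw [this, Real.Gamma_nat_eq_factorial]
    rw [one_div, inv_inv]
    rw [show ((k : ℝ) + 1) = ((k + 1 : ℕ) : ℝ) by push_cast; ring, rpow_natCast]
    field_simp
    ring

/-- The centred exponential has mean `0`, variance `σ ^ 2` and third moment `2 * σ ^ 3`, expressed as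
the integral of a general cubic polynomial. -/
theorem expDensity_cubic {σ : ℝ} (hσ : 0 < σ) (a b c d : ℝ) :
    Integrable (fun x => (a + b * x + c * x ^ 2 + d * x ^ 3) * expDensity σ x) ∧
      ∫ x, (a + b * x + c * x ^ 2 + d * x ^ 3) * expDensity σ x = a + c * σ ^ 2 + 2 * d * σ ^ 3 := by
  obtain ⟨i0, m0⟩ := expDensity_moment hσ 0
  obtain ⟨i1, m1⟩ := expDensity_moment hσ 1
  obtain ⟨i2, m2⟩ := expDensity_moment hσ 2
  obtain ⟨i3, m3⟩ := expDensity_moment hσ 3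
  have e : (fun x => (a + b * x + c * x ^ 2 + d * x ^ 3) * expDensity σ x) = fun x =>
      (a - b * σ + c * σ ^ 2 - d * σ ^ 3) * ((x + σ) ^ 0 * expDensity σ x) +
      (b - 2 * c * σ + 3 * d * σ ^ 2) * ((x + σ) ^ 1 * expDensity σ x) +
      (c - 3 * d * σ) * ((x + σ) ^ 2 * expDensity σ x) +
      d * ((x + σ) ^ 3 * expDensity σ x) := by
    funext x; ring
  rw [e]
  have j0 := i0.const_mul (a - b * σ + c * σ ^ 2 - d * σ ^ 3)
  have j1 := i1.const_mul (b - 2 * c * σ + 3 * d * σ ^ 2)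
  have j2 := i2.const_mul (c - 3 * d * σ)
  have j3 := i3.const_mul d
  refine ⟨((j0.add j1).add j2).add j3, ?_⟩
  rw [integral_add ((j0.fun_add j1).fun_add j2) j3, integral_add (j0.fun_add j1) j2,
    integral_add j0 j1]
  simp only [integral_const_mul, m0, m1, m2, m3]
  norm_num [Nat.factorial]
  ring

theorem LogConcaveLine.cubic {g : ℝ → ℝ} (hg : LogConcaveLine g) (hi : Integrable g)
    (h1 : ∫ x, g x = 1) (h2 : ∫ x, x * g x = 0) (a b c d : ℝ) :
    Integrable (fun x => (a + b * x + c * x ^ 2 + d * x ^ 3) * g x) ∧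
      ∫ x, (a + b * x + c * x ^ 2 + d * x ^ 3) * g x =
        a + c * (∫ x, x ^ 2 * g x) + d * ∫ x, x ^ 3 * g x := by
  have hne : ∫ x, g x ≠ 0 := by rw [h1]; exact one_ne_zero
  have j0 := hi.const_mul a
  have j1 := (hg.integrable_pow hi hne 1).const_mul b
  have j2 := (hg.integrable_pow hi hne 2).const_mul c
  have j3 := (hg.integrable_pow hi hne 3).const_mul d
  have e : (fun x => (a + b * x + c * x ^ 2 + d * x ^ 3) * g x) = fun x =>
      a * g x + b * (x ^ 1 * g x) + c * (x ^ 2 * g x) + d * (x ^ 3 * g x) := by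
    funext x; ring
  rw [e]
  refine ⟨((j0.add j1).add j2).add j3, ?_⟩
  rw [integral_add ((j0.fun_add j1).fun_add j2) j3, integral_add (j0.fun_add j1) j2,
    integral_add j0 j1]
  simp only [integral_const_mul, h1, pow_one, h2]
  ring

theorem expDensity_of_lt {σ x : ℝ} (hx : -σ < x) :
    expDensity σ x = σ⁻¹ * exp (-(σ⁻¹ * (x + σ))) := by
  simp [expDensity, hx]

theorem expDensity_of_le {σ x : ℝ} (hx : x ≤ -σ) : expDensity σ x = 0 := by
  simp [expDensity, hx]

/-- On `(-σ, ∞)`, where the logarithm of the exponential density is affine, a log-concave `g` lies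
above that density exactly on an interval. -/
theorem LogConcaveLine.ordConnected {g : ℝ → ℝ} (hg : LogConcaveLine g) {σ : ℝ} (hσ : 0 < σ) :
    ({x | -σ < x ∧ expDensity σ x ≤ g x} : Set ℝ).OrdConnected := by
  refine ⟨?_⟩
  rintro x ⟨hx, hxg⟩ y ⟨hy, hyg⟩ z ⟨hxz, hzy⟩
  have hz : -σ < z := hx.trans_le hxz
  refine ⟨hz, ?_⟩
  rcases hxz.eq_or_lt with rfl | hxz
  · exact hxg
  rcases hzy.eq_or_lt with rfl | hzy
  · exact hyg
  have hxy : 0 < y - x := by linarith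
  set t := (y - z) / (y - x) with ht
  have ht0 : 0 < t := div_pos (by linarith) hxy
  have ht1 : t < 1 := by rw [ht, div_lt_one hxy]; linarith
  have hcomb : t * x + (1 - t) * y = z := by rw [ht]; field_simp; ring
  have key := hg.le x y t ht0 ht1
  rw [hcomb] at key
  refine le_trans (le_of_eq ?_) ((mul_le_mul (rpow_le_rpow ?_ hxg ht0.le)
    (rpow_le_rpow ?_ hyg (by linarith)) ?_ ?_).trans key)
  · rw [expDensity_of_lt hx, expDensity_of_lt hy, expDensity_of_lt hz,
      mul_rpow (by positivity) (exp_pos _).le, mul_rpow (by positivity) (exp_pos _).le,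
      mul_mul_mul_comm, ← rpow_add (by positivity), ← exp_mul, ← exp_mul, ← exp_add, ← hcomb]
    simp only [add_sub_cancel, rpow_one]
    congr 2
    ring
  · rw [expDensity_of_lt hx]; positivity
  · rw [expDensity_of_lt hy]; positivity
  · rw [expDensity_of_lt hy]; positivity
  · exact rpow_nonneg (hg.nonneg _) _

/-- Among centred log-concave densities of a given variance, the exponential maximizes the third
moment. -/
theorem LogConcaveLine.third_moment_le {g : ℝ → ℝ} (hg : LogConcaveLine g) (hi : Integrable g)
    (h1 : ∫ x, g x = 1) (h2 : ∫ x, x * g x = 0) :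
    ∫ x, x ^ 3 * g x ≤ 2 * √(∫ x, x ^ 2 * g x) ^ 3 := by
  have hne : ∫ x, g x ≠ 0 := by rw [h1]; exact one_ne_zero
  have hcub := hg.cubic hi h1 h2
  have hvar0 : 0 ≤ ∫ x, x ^ 2 * g x :=
    integral_nonneg fun x => mul_nonneg (sq_nonneg _) (hg.nonneg _)
  have hvar : 0 < ∫ x, x ^ 2 * g x := by
    refine hvar0.lt_of_ne fun h => hne ?_
    have h0 := (integral_eq_zero_iff_of_nonneg
      (fun x => mul_nonneg (sq_nonneg _) (hg.nonneg _)) (hg.integrable_pow hi hne 2)).1 h.symm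
    refine integral_eq_zero_of_ae ?_
    filter_upwards [h0, Measure.ae_ne volume 0] with x hx hx0
    simpa [hx0] using hx
  set σ := √(∫ x, x ^ 2 * g x) with hσdef
  have hσ : 0 < σ := Real.sqrt_pos.2 hvar
  have hσ2 : ∫ x, x ^ 2 * g x = σ ^ 2 := (Real.sq_sqrt hvar0).symm
  rw [hσ2] at hcub
  have hexp := expDensity_cubic hσ
  have hdiff : ∀ a b c d : ℝ,
      Integrable (fun x => (a + b * x + c * x ^ 2 + d * x ^ 3) * (g x - expDensity σ x)) ∧
      ∫ x, (a + b * x + c * x ^ 2 + d * x ^ 3) * (g x - expDensity σ x) =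
        d * ((∫ x, x ^ 3 * g x) - 2 * σ ^ 3) := by
    intro a b c d
    simp only [mul_sub]
    refine ⟨(hcub a b c d).1.sub (hexp a b c d).1, ?_⟩
    rw [integral_sub (hcub a b c d).1 (hexp a b c d).1, (hcub a b c d).2, (hexp a b c d).2]
    ring
  set S : Set ℝ := {x | -σ < x ∧ expDensity σ x ≤ g x} with hS
  have hord : S.OrdConnected := hg.ordConnected hσ
  have hlow : ∀ x, x ≤ -σ → 0 ≤ g x - expDensity σ x := fun x hx => by
    rw [expDensity_of_le hx, sub_zero]; exact hg.nonneg x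
  have hout : ∀ x, -σ < x → x ∉ S → g x - expDensity σ x ≤ 0 := fun x hx hxS => by
    have : ¬ expDensity σ x ≤ g x := fun h => hxS ⟨hx, h⟩
    linarith
  have hin : ∀ x ∈ S, 0 ≤ g x - expDensity σ x := fun x hx => by linarith [hx.2]
  have hbb : BddBelow S := ⟨-σ, fun x hx => hx.1.le⟩
  -- `S` is the interval on which `g` dominates the exponential density. If it is bounded, its
  -- endpoints are the roots `p`, `q` of the cubic (both are taken to be `0` when `S` is empty).
  by_cases hbdd : S.Nonempty → BddAbove S
  · obtain ⟨p, q, hp, hpq, hpq'⟩ : ∃ p q : ℝ, -σ ≤ p ∧ p ≤ q ∧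
        ∀ x, -σ < x → (x - p) * (x - q) * (g x - expDensity σ x) ≤ 0 := by
      rcases S.eq_empty_or_nonempty with h0 | h0
      · refine ⟨0, 0, by linarith, le_rfl, fun x hx => ?_⟩
        exact mul_nonpos_of_nonneg_of_nonpos (mul_self_nonneg _) (hout x hx (by simp [h0]))
      · have hba := hbdd h0
        refine ⟨sInf S, sSup S, le_csInf h0 fun x hx => hx.1.le, csInf_le_csSup h0 hbb hba,
          fun x hx => ?_⟩
        have hle := csInf_le_csSup h0 hbb hba
        rcases lt_trichotomy x (sInf S) with h | h | h
        · refine mul_nonpos_of_nonneg_of_nonpos (mul_nonneg_of_nonpos_of_nonpos ?_ ?_)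
            (hout x hx fun hxS => absurd (csInf_le hbb hxS) (not_le.2 h))
          · linarith
          · linarith
        · simp [h]
        · rcases lt_trichotomy x (sSup S) with h' | h' | h'
          · obtain ⟨u, hu, hux⟩ := exists_lt_of_csInf_lt h0 h
            obtain ⟨v, hv, hxv⟩ := exists_lt_of_lt_csSup h0 h'
            refine mul_nonpos_of_nonpos_of_nonneg (mul_nonpos_of_nonneg_of_nonpos ?_ ?_)
              (hin x (hord.out hu hv ⟨hux.le, hxv.le⟩))
            · linarith
            · linarith
          · simp [h']
          · refine mul_nonpos_of_nonneg_of_nonpos (mul_nonneg ?_ ?_)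
              (hout x hx fun hxS => absurd (le_csSup hba hxS) (not_le.2 h'))
            · linarith
            · linarith
    have hneg : ∀ x, (x + σ) * ((x - p) * (x - q)) * (g x - expDensity σ x) ≤ 0 := by
      intro x
      rcases le_or_gt x (-σ) with hx | hx
      · refine mul_nonpos_of_nonpos_of_nonneg (mul_nonpos_of_nonpos_of_nonneg (by linarith)
          (mul_nonneg_of_nonpos_of_nonpos (by linarith) (by linarith))) (hlow x hx)
      · rw [mul_assoc]
        exact mul_nonpos_of_nonneg_of_nonpos (by linarith) (hpq' x hx)
    have h3 := (hdiff (σ * p * q) (p * q - σ * p - σ * q) (σ - p - q) 1).2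
    have h4 : ∫ x, (σ * p * q + (p * q - σ * p - σ * q) * x + (σ - p - q) * x ^ 2 + 1 * x ^ 3) *
        (g x - expDensity σ x) ≤ 0 := by
      refine integral_nonpos fun x => ?_
      refine le_trans (le_of_eq ?_) (hneg x)
      ring
    linarith
  · push Not at hbdd
    obtain ⟨h0, hub⟩ := hbdd
    -- If `S` is unbounded, then a quadratic multiple of `g - expDensity σ` is nonnegative and has
    -- integral `0`, so that `g` agrees with the exponential density almost everywhere.
    have hpos : ∀ x, 0 ≤ (x + σ) * (x - sInf S) * (g x - expDensity σ x) := by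
      intro x
      have hle : -σ ≤ sInf S := le_csInf h0 fun x hx => hx.1.le
      rcases le_or_gt x (-σ) with hx | hx
      · exact mul_nonneg (mul_nonneg_of_nonpos_of_nonpos (by linarith) (by linarith)) (hlow x hx)
      · rw [mul_assoc]
        refine mul_nonneg (by linarith) ?_
        rcases lt_trichotomy x (sInf S) with h | h | h
        · exact mul_nonneg_of_nonpos_of_nonpos (by linarith)
            (hout x hx fun hxS => absurd (csInf_le hbb hxS) (not_le.2 h))
        · simp [h]
        · obtain ⟨u, hu, hux⟩ := exists_lt_of_csInf_lt h0 h
          obtain ⟨v, hv, hxv⟩ := not_bddAbove_iff.1 hub x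
          exact mul_nonneg (by linarith) (hin x (hord.out hu hv ⟨hux.le, hxv.le⟩))
    have h3 := hdiff (-(σ * sInf S)) (σ - sInf S) 1 0
    have e : (fun x => (-(σ * sInf S) + (σ - sInf S) * x + 1 * x ^ 2 + 0 * x ^ 3) *
        (g x - expDensity σ x)) = fun x => (x + σ) * (x - sInf S) * (g x - expDensity σ x) := by
      funext x; ring
    rw [e] at h3
    have h4 := (integral_eq_zero_iff_of_nonneg hpos h3.1).1 (by rw [h3.2]; ring)
    have h5 : ∫ x, (0 + 0 * x + 0 * x ^ 2 + 1 * x ^ 3) * (g x - expDensity σ x) = 0 := by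
      refine integral_eq_zero_of_ae ?_
      filter_upwards [h4, Measure.ae_ne volume (-σ), Measure.ae_ne volume (sInf S)] with x hx hx1 hx2
      have hx1' : x + σ ≠ 0 := fun h => hx1 (by linarith)
      have hx2' : x - sInf S ≠ 0 := sub_ne_zero.2 hx2
      have hx3 : g x - expDensity σ x = 0 := by simpa [hx1', hx2'] using hx
      simp [hx3]
    rw [(hdiff 0 0 0 1).2] at h5
    linarith

/-! ### Marginals of log-concave measures -/

/-- A log-concave `[0, ∞]`-valued function of integral `1` is finite everywhere: if it were infinite
at one point, it would be infinite on an entire segment towards a point where it is positive. -/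
theorem finite_of_logConcave {G : ℝ → ℝ≥0∞} (hG : Measurable G) (h1 : ∫⁻ x, G x = 1)
    (hlc : ∀ x y t : ℝ, 0 < t → t < 1 → G x ^ t * G y ^ (1 - t) ≤ G (t * x + (1 - t) * y))
    (x : ℝ) : G x ≠ ∞ := by
  intro hx
  have hae : ∀ᵐ z, G z < ∞ := ae_lt_top hG (by simp [h1])
  obtain ⟨y, hxy, hy⟩ : ∃ y, x ≠ y ∧ G y ≠ 0 := by
    by_contra! h
    have : ∫⁻ z, G z = 0 := by
      rw [lintegral_eq_zero_iff hG]
      filter_upwards [Measure.ae_ne volume x] with z hz using h z hz.symm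
    simp [this] at h1
  have hsub : Set.Ioo (min x y) (max x y) ⊆ {z | ¬ G z < ∞} := by
    rw [← openSegment_eq_Ioo' hxy]
    rintro _ ⟨a, b, ha, hb, hab, rfl⟩
    obtain rfl : b = 1 - a := by linarith
    have := hlc x y a ha (by linarith)
    rw [hx, ENNReal.top_rpow_of_pos ha, ENNReal.top_mul] at this
    · simpa using this
    · simp [ENNReal.rpow_eq_zero_iff, hy, hb.not_gt]
  have h0 : volume (Set.Ioo (min x y) (max x y)) = 0 := measure_mono_null hsub hae
  simp at h0
  exact hxy (le_antisymm h0.2 h0.1)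

/-- The marginal of a log-concave measure in a unit direction `u` has a log-concave density. In
coordinates whose first axis is `u`, the density is obtained by integrating out the remaining
coordinates, and Prékopa–Leindler makes it log-concave. -/
theorem exists_marginal_density {n : ℕ} (hn : 1 ≤ n) {μ : Measure (EuclideanSpace ℝ (Fin n))}
    [IsProbabilityMeasure μ] (hlc : IsLogConcaveMeasure μ) {u : EuclideanSpace ℝ (Fin n)}
    (hu : ‖u‖ = 1) :
    ∃ g : ℝ → ℝ, Measurable g ∧ LogConcaveLine g ∧
      μ.map (fun x => ⟪u, x⟫) = volume.withDensity fun s => ENNReal.ofReal (g s) := by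
  obtain ⟨m, rfl⟩ : ∃ m, n = m + 1 := ⟨n - 1, by omega⟩
  obtain ⟨p, hpm, ⟨hp0, hplc⟩, hμ⟩ := hlc
  obtain ⟨b, hb⟩ : ∃ b : OrthonormalBasis (Fin (m + 1)) ℝ (EuclideanSpace ℝ (Fin (m + 1))),
      ∀ i ∈ ({0} : Set (Fin (m + 1))), b i = u := by
    refine Orthonormal.exists_orthonormalBasis_extension_of_card_eq (by simp) (v := fun _ => u) ?_
    exact ⟨fun _ => hu, fun i j hij => absurd (Subsingleton.elim i j) hij⟩
  have hb0 : b 0 = u := hb 0 rfl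
  let φ : EuclideanSpace ℝ (Fin (m + 1)) ≃ᵐ ℝ × (Fin m → ℝ) :=
    (b.measurableEquiv.trans (MeasurableEquiv.toLp 2 (Fin (m + 1) → ℝ)).symm).trans
      (MeasurableEquiv.piFinSuccAbove (fun _ : Fin (m + 1) => ℝ) 0)
  have hφ : MeasurePreserving φ volume (volume.prod volume) :=
    ((b.measurePreserving_measurableEquiv.trans
      (PiLp.volume_preserving_ofLp (Fin (m + 1)))).trans
      (volume_preserving_piFinSuccAbove (fun _ : Fin (m + 1) => ℝ) 0))
  have hφ1 : ∀ x, (φ x).1 = ⟪u, x⟫ := by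
    intro x
    rw [← hb0, ← b.repr_apply_apply]
    rfl
  have hφ2 : ∀ x j, (φ x).2 j = ⟪b j.succ, x⟫ := by
    intro x j
    rw [← b.repr_apply_apply]
    rfl
  have hsymm : ∀ (t : ℝ) (z w : ℝ × (Fin m → ℝ)),
      φ.symm (t • z + (1 - t) • w) = t • φ.symm z + (1 - t) • φ.symm w := by
    intro t z w
    apply φ.injective
    rw [φ.apply_symm_apply]
    refine Prod.ext ?_ (funext fun j => ?_)
    · rw [hφ1, inner_add_right, inner_smul_right, inner_smul_right, ← hφ1, ← hφ1]
      simp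
    · rw [hφ2, inner_add_right, inner_smul_right, inner_smul_right, ← hφ2, ← hφ2]
      simp
  set P : ℝ × (Fin m → ℝ) → ℝ≥0∞ := fun z => ENNReal.ofReal (p (φ.symm z)) with hP
  have hPm : Measurable P := (hpm.comp φ.symm.measurable).ennreal_ofReal
  set G : ℝ → ℝ≥0∞ := fun s => ∫⁻ y, P (s, y) with hG
  have hGm : Measurable G := hPm.lintegral_prod_right'
  have hGlc : ∀ x y t : ℝ, 0 < t → t < 1 →
      G x ^ t * G y ^ (1 - t) ≤ G (t * x + (1 - t) * y) := by
    intro x y t ht0 ht1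
    refine prekopaLeindler_pi m t ht0 ht1 _ _ _ (hPm.comp measurable_prodMk_left)
      (hPm.comp measurable_prodMk_left) (hPm.comp measurable_prodMk_left) fun x' y' => ?_
    simp only [hP]
    rw [ENNReal.ofReal_rpow_of_nonneg (hp0 _) ht0.le,
      ENNReal.ofReal_rpow_of_nonneg (hp0 _) (by linarith), ← ENNReal.ofReal_mul
        (rpow_nonneg (hp0 _) _)]
    refine ENNReal.ofReal_le_ofReal ?_
    refine (hplc _ _ t ht0.le ht1.le).trans (le_of_eq ?_)
    rw [← hsymm]
    rfl
  have hmap : μ.map (fun x => ⟪u, x⟫) = volume.withDensity G := by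
    have hinner : Measurable fun x : EuclideanSpace ℝ (Fin (m + 1)) => ⟪u, x⟫ := by fun_prop
    ext A hA
    rw [Measure.map_apply hinner hA, hμ, withDensity_apply _ (hinner hA), withDensity_apply _ hA,
      ← lintegral_indicator (hinner hA), ← lintegral_indicator hA]
    have e1 : ∀ x, ((fun x => ⟪u, x⟫) ⁻¹' A).indicator (fun x => ENNReal.ofReal (p x)) x =
        (fun z : ℝ × (Fin m → ℝ) => A.indicator 1 z.1 * P z) (φ x) := by
      intro x
      simp only [hP, φ.symm_apply_apply, hφ1]
      by_cases hx : ⟪u, x⟫ ∈ A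
      · simp [hx]
      · simp [hx]
    simp_rw [e1]
    have hm1 : Measurable fun z : ℝ × (Fin m → ℝ) => A.indicator (1 : ℝ → ℝ≥0∞) z.1 * P z :=
      ((measurable_one.indicator hA).comp measurable_fst).mul hPm
    rw [hφ.lintegral_comp hm1, lintegral_prod _ hm1.aemeasurable]
    refine lintegral_congr fun s => ?_
    simp only
    rw [lintegral_const_mul _ (by fun_prop)]
    by_cases hs : s ∈ A
    · simp [hs, hG]
    · simp [hs]
  have hG1 : ∫⁻ s, G s = 1 := by
    have : IsProbabilityMeasure (μ.map fun x => ⟪u, x⟫) :=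
      Measure.isProbabilityMeasure_map (by fun_prop)
    have h2 := this.measure_univ
    rwa [hmap, withDensity_apply _ MeasurableSet.univ, Measure.restrict_univ] at h2
  have hfin := finite_of_logConcave hGm hG1 hGlc
  refine ⟨fun s => (G s).toReal, hGm.ennreal_toReal, ⟨fun _ => ENNReal.toReal_nonneg, ?_⟩, ?_⟩
  · intro x y t ht0 ht1
    rw [ENNReal.toReal_rpow, ENNReal.toReal_rpow, ← ENNReal.toReal_mul]
    exact ENNReal.toReal_mono (hfin _) (hGlc x y t ht0 ht1)
  · simp only [ENNReal.ofReal_toReal (hfin _)]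
    exact hmap

/-- The one-dimensional moment results, transferred to the marginals of a log-concave measure. -/
theorem marginal_moments {n : ℕ} (hn : 1 ≤ n) {μ : Measure (EuclideanSpace ℝ (Fin n))}
    [IsProbabilityMeasure μ] (hlc : IsLogConcaveMeasure μ) {u : EuclideanSpace ℝ (Fin n)}
    (hu : ‖u‖ = 1) :
    (∀ k : ℕ, Integrable (fun x => ⟪u, x⟫ ^ k) μ) ∧
      (∫ x, ⟪u, x⟫ ∂μ = 0 → ∫ x, ⟪u, x⟫ ^ 3 ∂μ ≤ 2 * √(∫ x, ⟪u, x⟫ ^ 2 ∂μ) ^ 3) := by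
  obtain ⟨g, hgm, hg, hmap⟩ := exists_marginal_density hn hlc hu
  have hinner : Measurable fun x : EuclideanSpace ℝ (Fin n) => ⟪u, x⟫ := by fun_prop
  have hm : Measurable fun s => ENNReal.ofReal (g s) := hgm.ennreal_ofReal
  have hfin : ∀ᵐ s : ℝ, ENNReal.ofReal (g s) < ∞ := by simp
  have hprob : IsProbabilityMeasure (μ.map fun x => ⟪u, x⟫) :=
    Measure.isProbabilityMeasure_map hinner.aemeasurable
  have hint : ∀ k : ℕ, Integrable (fun x => ⟪u, x⟫ ^ k) μ ↔ Integrable fun s => s ^ k * g s := by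
    intro k
    have h1 := integrable_map_measure (μ := μ) (f := fun x => ⟪u, x⟫) (g := fun s : ℝ => s ^ k)
      (by fun_prop) hinner.aemeasurable
    rw [hmap, integrable_withDensity_iff_integrable_smul' hm hfin] at h1
    simp only [ENNReal.toReal_ofReal (hg.nonneg _), smul_eq_mul] at h1
    simp only [mul_comm _ (g _)]
    exact h1.symm
  have hval : ∀ k : ℕ, ∫ x, ⟪u, x⟫ ^ k ∂μ = ∫ s, s ^ k * g s := by
    intro k
    have h1 := integral_map (μ := μ) (φ := fun x => ⟪u, x⟫) (f := fun s : ℝ => s ^ k)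
      hinner.aemeasurable (by fun_prop)
    rw [hmap, integral_withDensity_eq_integral_toReal_smul hm hfin] at h1
    simp only [ENNReal.toReal_ofReal (hg.nonneg _), smul_eq_mul] at h1
    simp only [mul_comm _ (g _)]
    exact h1.symm
  have hi : Integrable g := by simpa using (hint 0).1 (by simp)
  have h1 : ∫ s, g s = 1 := by simpa using (hval 0).symm
  refine ⟨fun k => (hint k).2 (hg.integrable_pow hi (by simp [h1]) k), fun h0 => ?_⟩
  rw [hval, hval]
  refine hg.third_moment_le hi h1 ?_
  have := hval 1
  simp only [pow_one] at this
  rw [← this, h0]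

/-! ### From marginals to the operator norm -/

theorem integrable_inner_pow {n : ℕ} (hn : 1 ≤ n) {μ : Measure (EuclideanSpace ℝ (Fin n))}
    [IsProbabilityMeasure μ] (hlc : IsLogConcaveMeasure μ) (a : EuclideanSpace ℝ (Fin n))
    (k : ℕ) : Integrable (fun x => ⟪a, x⟫ ^ k) μ := by
  by_cases ha : a = 0
  · simp [ha]
  have hu : ‖(‖a‖⁻¹ • a)‖ = 1 := by
    rw [norm_smul, norm_inv, norm_norm, inv_mul_cancel₀ (norm_ne_zero_iff.2 ha)]
  have := ((marginal_moments hn hlc hu).1 k).const_mul (‖a‖ ^ k)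
  refine this.congr (Filter.Eventually.of_forall fun x => ?_)
  simp only
  rw [← mul_pow, real_inner_smul_left, ← mul_assoc, mul_inv_cancel₀ (norm_ne_zero_iff.2 ha),
    one_mul]

theorem integrable_inner_mul {n : ℕ} (hn : 1 ≤ n) {μ : Measure (EuclideanSpace ℝ (Fin n))}
    [IsProbabilityMeasure μ] (hlc : IsLogConcaveMeasure μ) (a b : EuclideanSpace ℝ (Fin n)) :
    Integrable (fun x => ⟪a, x⟫ * ⟪b, x⟫) μ := by
  refine Integrable.mono' ((integrable_inner_pow hn hlc a 2).add (integrable_inner_pow hn hlc b 2))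
    (by fun_prop) (Filter.Eventually.of_forall fun x => ?_)
  rw [Real.norm_eq_abs, abs_le, Pi.add_apply]
  constructor <;> nlinarith [sq_nonneg (⟪a, x⟫ + ⟪b, x⟫), sq_nonneg (⟪a, x⟫ - ⟪b, x⟫)]

theorem abs_mul_mul_le (a b c : ℝ) : |a * b * c| ≤ |a ^ 3| + |b ^ 3| + |c ^ 3| := by
  simp only [abs_mul, abs_pow]
  have ha := abs_nonneg a
  have hb := abs_nonneg b
  have hc := abs_nonneg c
  generalize |a| = p at *
  generalize |b| = q at *
  generalize |c| = r at *
  nlinarith [mul_nonneg (add_nonneg (add_nonneg ha hb) hc)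
    (add_nonneg (add_nonneg (sq_nonneg (p - q)) (sq_nonneg (q - r))) (sq_nonneg (r - p))),
    mul_nonneg (mul_nonneg ha hb) hc]

theorem integrable_inner_mul_mul {n : ℕ} (hn : 1 ≤ n) {μ : Measure (EuclideanSpace ℝ (Fin n))}
    [IsProbabilityMeasure μ] (hlc : IsLogConcaveMeasure μ) (a b c : EuclideanSpace ℝ (Fin n)) :
    Integrable (fun x => ⟪a, x⟫ * ⟪b, x⟫ * ⟪c, x⟫) μ := by
  refine Integrable.mono' (((integrable_inner_pow hn hlc a 3).abs.add
    (integrable_inner_pow hn hlc b 3).abs).add (integrable_inner_pow hn hlc c 3).abs)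
    (by fun_prop) (Filter.Eventually.of_forall fun x => ?_)
  exact abs_mul_mul_le _ _ _

/-- A bound on the bilinear form by `K (‖u‖² + ‖v‖²) / 2` suffices for the operator norm: rescale the
vector `v = M u` to have the norm of `u`. -/
theorem matOpNorm_le {n : ℕ} {M : Matrix (Fin n) (Fin n) ℝ} {K : ℝ} (hK : 0 ≤ K)
    (h : ∀ u v : EuclideanSpace ℝ (Fin n),
      ⟪v, Matrix.toEuclideanLin M u⟫ ≤ K * ((‖u‖ ^ 2 + ‖v‖ ^ 2) / 2)) : matOpNorm M ≤ K := by
  refine ContinuousLinearMap.opNorm_le_bound _ hK fun u => ?_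
  rw [LinearMap.coe_toContinuousLinearMap']
  set w := Matrix.toEuclideanLin M u with hw
  by_cases hw0 : w = 0
  · rw [hw0, norm_zero]; positivity
  have hwn : 0 < ‖w‖ := norm_pos_iff.2 hw0
  have hu0 : 0 < ‖u‖ := norm_pos_iff.2 fun h0 => hw0 (by rw [hw, h0, map_zero])
  have h1 := h u ((‖u‖ / ‖w‖) • w)
  rw [← hw, real_inner_smul_left, real_inner_self_eq_norm_sq, norm_smul, norm_div, norm_norm,
    norm_norm, div_mul_cancel₀ _ hwn.ne'] at h1
  have h2 : ‖u‖ / ‖w‖ * ‖w‖ ^ 2 = ‖u‖ * ‖w‖ := by field_simp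
  rw [h2] at h1
  refine le_of_mul_le_mul_left (h1.trans (le_of_eq ?_)) hu0
  ring

theorem inner_toEuclideanLin {n : ℕ} (M : Matrix (Fin n) (Fin n) ℝ)
    (u v : EuclideanSpace ℝ (Fin n)) :
    ⟪v, Matrix.toEuclideanLin M u⟫ = ∑ i, ∑ j, v i * u j * M i j := by
  simp only [PiLp.inner_apply, Matrix.toLpLin_apply, Matrix.mulVec, dotProduct,
    RCLike.inner_apply, conj_trivial]
  refine Finset.sum_congr rfl fun i _ => ?_
  rw [Finset.sum_mul]
  refine Finset.sum_congr rfl fun j _ => ?_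
  ring

theorem coord_eq_inner {n : ℕ} (x : EuclideanSpace ℝ (Fin n)) (i : Fin n) :
    x i = ⟪EuclideanSpace.single i (1 : ℝ), x⟫ := by
  simp [EuclideanSpace.inner_single_left]

theorem inner_eq_sum {n : ℕ} (v x : EuclideanSpace ℝ (Fin n)) : ⟪v, x⟫ = ∑ i, v i * x i := by
  simp only [PiLp.inner_apply, RCLike.inner_apply, conj_trivial]
  exact Finset.sum_congr rfl fun i _ => mul_comm _ _

/-- The bilinear form of the matrix `E[w(X) X ⊗ X]` is `E[w(X) ⟨v, X⟩ ⟨u, X⟩]`. -/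
theorem integral_inner_mul_eq {n : ℕ} {μ : Measure (EuclideanSpace ℝ (Fin n))}
    (w : EuclideanSpace ℝ (Fin n) → ℝ) (hw : ∀ i j, Integrable (fun x => w x * (x i * x j)) μ)
    (u v : EuclideanSpace ℝ (Fin n)) :
    ⟪v, Matrix.toEuclideanLin (Matrix.of fun i j => ∫ x, w x * (x i * x j) ∂μ) u⟫ =
      ∫ x, w x * ⟪v, x⟫ * ⟪u, x⟫ ∂μ := by
  rw [inner_toEuclideanLin]
  simp only [Matrix.of_apply, ← integral_const_mul]
  have e : ∀ x, w x * ⟪v, x⟫ * ⟪u, x⟫ = ∑ i, ∑ j, v i * u j * (w x * (x i * x j)) := by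
    intro x
    rw [inner_eq_sum, inner_eq_sum, mul_assoc, Finset.sum_mul_sum, Finset.mul_sum]
    refine Finset.sum_congr rfl fun i _ => ?_
    rw [Finset.mul_sum]
    refine Finset.sum_congr rfl fun j _ => ?_
    ring
  simp_rw [e]
  rw [integral_finsetSum]
  · refine Finset.sum_congr rfl fun i _ => ?_
    rw [integral_finsetSum]
    exact fun j _ => (hw i j).const_mul _
  · exact fun i _ => integrable_finsetSum _ fun j _ => (hw i j).const_mul _

/-- For a centered log-concave random vector `X` and a unit vector `θ`, with
`H_θ = E[⟨X,θ⟩ (X ⊗ X)]`, one has `‖H_θ‖²_op ≤ 9 ‖Cov(X)‖³_op`. -/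
theorem third_moment_opNorm_bound (n : ℕ) (hn : 1 ≤ n)
    (μ : Measure (EuclideanSpace ℝ (Fin n))) (hprob : IsProbabilityMeasure μ)
    (hlc : IsLogConcaveMeasure μ) (hcent : ∀ i, ∫ x, x i ∂μ = 0)
    (θ : EuclideanSpace ℝ (Fin n)) (hθ : ‖θ‖ = 1) :
    matOpNorm (Matrix.of fun k l => ∫ x, ⟪x, θ⟫ * (x k * x l) ∂μ) ^ 2 ≤
      9 * matOpNorm (covMatrix μ) ^ 3 := by
  have i3 := integrable_inner_mul_mul hn hlc
  set L := matOpNorm (covMatrix μ) with hL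
  have hL0 : 0 ≤ L := norm_nonneg _
  have hmean : ∀ a : EuclideanSpace ℝ (Fin n), ∫ x, ⟪a, x⟫ ∂μ = 0 := by
    intro a
    simp only [inner_eq_sum]
    rw [integral_finsetSum]
    · simp [integral_const_mul, hcent]
    · intro i _
      refine Integrable.const_mul ?_ _
      simpa [← coord_eq_inner] using
        integrable_inner_pow hn hlc (EuclideanSpace.single i (1 : ℝ)) 1
  have hvar : ∀ a : EuclideanSpace ℝ (Fin n), ∫ x, ⟪a, x⟫ ^ 2 ∂μ ≤ L * ‖a‖ ^ 2 := by
    intro a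
    have hcov : covMatrix μ = Matrix.of fun i j => ∫ x, 1 * (x i * x j) ∂μ := by
      simp [covMatrix, hcent]
    have h1 := integral_inner_mul_eq (μ := μ) (fun _ => 1) (fun i j => by
      have := integrable_inner_mul hn hlc (EuclideanSpace.single i (1 : ℝ))
        (EuclideanSpace.single j (1 : ℝ))
      simp only [← coord_eq_inner] at this
      simpa using this) a a
    rw [← hcov] at h1
    have h2 : ∫ x, ⟪a, x⟫ ^ 2 ∂μ = ⟪a, Matrix.toEuclideanLin (covMatrix μ) a⟫ := by
      simp only [h1, sq, one_mul]
    rw [h2]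
    refine (real_inner_le_norm _ _).trans ?_
    have h3 := (LinearMap.toContinuousLinearMap (Matrix.toEuclideanLin (covMatrix μ))).le_opNorm a
    rw [LinearMap.coe_toContinuousLinearMap'] at h3
    calc ‖a‖ * ‖Matrix.toEuclideanLin (covMatrix μ) a‖ ≤ ‖a‖ * (L * ‖a‖) :=
          mul_le_mul_of_nonneg_left h3 (norm_nonneg a)
      _ = L * ‖a‖ ^ 2 := by ring
  set s := √L with hs
  have hs0 : 0 ≤ s := Real.sqrt_nonneg _
  have hsL : s ^ 2 = L := Real.sq_sqrt hL0
  have hcube_unit : ∀ u : EuclideanSpace ℝ (Fin n), ‖u‖ = 1 → ∫ x, ⟪u, x⟫ ^ 3 ∂μ ≤ 2 * s ^ 3 := by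
    intro u hu
    refine ((marginal_moments hn hlc hu).2 (hmean u)).trans ?_
    have := hvar u
    rw [hu, one_pow, mul_one] at this
    gcongr
    exact Real.sqrt_le_sqrt this
  have hcube_le : ∀ a : EuclideanSpace ℝ (Fin n), ∫ x, ⟪a, x⟫ ^ 3 ∂μ ≤ 2 * s ^ 3 * ‖a‖ ^ 3 := by
    intro a
    by_cases ha : a = 0
    · simp [ha]
    have hu : ‖(‖a‖⁻¹ • a)‖ = 1 := by
      rw [norm_smul, norm_inv, norm_norm, inv_mul_cancel₀ (norm_ne_zero_iff.2 ha)]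
    have h1 := mul_le_mul_of_nonneg_right (hcube_unit _ hu) (pow_nonneg (norm_nonneg a) 3)
    refine le_trans (le_of_eq ?_) h1
    rw [← integral_mul_const]
    congr 1
    funext x
    rw [real_inner_smul_left, ← mul_pow]
    congr 1
    field_simp [norm_ne_zero_iff.2 ha]
  have hcube : ∀ a : EuclideanSpace ℝ (Fin n), |∫ x, ⟪a, x⟫ ^ 3 ∂μ| ≤ 2 * s ^ 3 * ‖a‖ ^ 3 := by
    intro a
    refine abs_le.2 ⟨?_, hcube_le a⟩
    have h1 := hcube_le (-a)
    simp only [inner_neg_left, norm_neg, Odd.neg_pow (by decide : Odd 3), integral_neg] at h1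
    linarith
  have hquad_unit : ∀ u : EuclideanSpace ℝ (Fin n), ‖u‖ = 1 →
      |∫ x, ⟪θ, x⟫ * ⟪u, x⟫ ^ 2 ∂μ| ≤ 3 * s ^ 3 := by
    intro u hu
    -- Polarizing with `θ / 2` in place of `θ` is what brings the constant below `3`.
    set y := (2⁻¹ : ℝ) • θ with hy
    have hyn : ‖y‖ = 2⁻¹ := by rw [hy, norm_smul, hθ]; norm_num
    have hpol : 3 * ∫ x, ⟪θ, x⟫ * ⟪u, x⟫ ^ 2 ∂μ = (∫ x, ⟪y + u, x⟫ ^ 3 ∂μ) +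
        (∫ x, ⟪y - u, x⟫ ^ 3 ∂μ) - 2 * ∫ x, ⟪y, x⟫ ^ 3 ∂μ := by
      rw [← integral_const_mul, ← integral_const_mul, ← integral_add
        (integrable_inner_pow hn hlc _ 3) (integrable_inner_pow hn hlc _ 3), ← integral_sub
        ((integrable_inner_pow hn hlc _ 3).fun_add (integrable_inner_pow hn hlc _ 3))
        ((integrable_inner_pow hn hlc _ 3).const_mul 2)]
      congr 1
      funext x
      simp only [inner_add_left, inner_sub_left, hy, real_inner_smul_left]
      ring
    have hsum : ‖y + u‖ ^ 2 + ‖y - u‖ ^ 2 = 5 / 2 := by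
      have := parallelogram_law_with_norm ℝ y u
      rw [hyn, hu] at this
      nlinarith
    have hp1 : ‖y + u‖ ≤ 3 / 2 := (norm_add_le _ _).trans (by rw [hyn, hu]; norm_num)
    have hp2 : ‖y - u‖ ≤ 3 / 2 := (norm_sub_le _ _).trans (by rw [hyn, hu]; norm_num)
    -- Each norm `r ≤ 3/2` has `r³ ≤ (3/2) r²`, and the squares add up to `5/2`.
    have hsum3 : ‖y + u‖ ^ 3 + ‖y - u‖ ^ 3 ≤ 15 / 4 := by
      nlinarith [mul_nonneg (sq_nonneg ‖y + u‖) (sub_nonneg.2 hp1),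
        mul_nonneg (sq_nonneg ‖y - u‖) (sub_nonneg.2 hp2)]
    have c1 := abs_le.1 (hcube (y + u))
    have c2 := abs_le.1 (hcube (y - u))
    have c3 := abs_le.1 (hcube y)
    rw [hyn] at c3
    have hs3 : 0 ≤ s ^ 3 := by positivity
    have c4 := mul_le_mul_of_nonneg_left hsum3 hs3
    refine abs_le.2 ⟨?_, ?_⟩ <;> nlinarith [c1.1, c1.2, c2.1, c2.2, c3.1, c3.2]
  have hquad : ∀ a : EuclideanSpace ℝ (Fin n),
      |∫ x, ⟪θ, x⟫ * ⟪a, x⟫ ^ 2 ∂μ| ≤ 3 * s ^ 3 * ‖a‖ ^ 2 := by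
    intro a
    by_cases ha : a = 0
    · simp [ha]
    have hu : ‖(‖a‖⁻¹ • a)‖ = 1 := by
      rw [norm_smul, norm_inv, norm_norm, inv_mul_cancel₀ (norm_ne_zero_iff.2 ha)]
    have h1 := mul_le_mul_of_nonneg_right (hquad_unit _ hu) (pow_nonneg (norm_nonneg a) 2)
    refine le_trans (le_of_eq ?_) h1
    rw [← abs_of_nonneg (pow_nonneg (norm_nonneg a) 2), ← abs_mul,
      ← integral_mul_const]
    congr 2
    funext x
    rw [real_inner_smul_left]
    field_simp [norm_ne_zero_iff.2 ha]
  have hmain : matOpNorm (Matrix.of fun k l => ∫ x, ⟪x, θ⟫ * (x k * x l) ∂μ) ≤ 3 * s ^ 3 := by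
    refine matOpNorm_le (by positivity) fun u v => ?_
    rw [integral_inner_mul_eq (μ := μ) (fun x => ⟪x, θ⟫) (fun i j => by
      have := i3 θ (EuclideanSpace.single i (1 : ℝ)) (EuclideanSpace.single j (1 : ℝ))
      simp only [← coord_eq_inner] at this
      simpa only [real_inner_comm, mul_assoc] using this) u v]
    have hq : ∀ a, Integrable (fun x => ⟪θ, x⟫ * ⟪a, x⟫ ^ 2) μ := fun a => by
      simpa only [sq, mul_assoc] using i3 θ a a
    have hpol : 4 * ∫ x, ⟪x, θ⟫ * ⟪v, x⟫ * ⟪u, x⟫ ∂μ =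
        (∫ x, ⟪θ, x⟫ * ⟪u + v, x⟫ ^ 2 ∂μ) - ∫ x, ⟪θ, x⟫ * ⟪u - v, x⟫ ^ 2 ∂μ := by
      rw [← integral_const_mul, ← integral_sub (hq _) (hq _)]
      congr 1
      funext x
      rw [inner_add_left, inner_sub_left, real_inner_comm]
      ring
    have c1 := abs_le.1 (hquad (u + v))
    have c2 := abs_le.1 (hquad (u - v))
    have hpar := parallelogram_law_with_norm ℝ u v
    have hpar' : 3 * s ^ 3 * ‖u + v‖ ^ 2 + 3 * s ^ 3 * ‖u - v‖ ^ 2 =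
        3 * s ^ 3 * (2 * (‖u‖ ^ 2 + ‖v‖ ^ 2)) := by
      linear_combination 3 * s ^ 3 * hpar
    linarith [c1.2, c2.1]
  calc matOpNorm (Matrix.of fun k l => ∫ x, ⟪x, θ⟫ * (x k * x l) ∂μ) ^ 2 ≤ (3 * s ^ 3) ^ 2 :=
        pow_le_pow_left₀ (norm_nonneg _) hmain 2
    _ = 9 * L ^ 3 := by rw [← hsL]; ring

end
end

section
/- Let n ≥ 1 and let K ⊆ ℝⁿ be a convex set with γ_n(K) ≥ 9/10, where γ_n is the standard Gaussian probability measure on ℝⁿ. Then the closed Euclidean unit ball Bⁿ is contained in K. -/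
/-!
If some `x` with `‖x‖ ≤ 1` is not in `K`, Hahn–Banach separates `x` from the interior of `K`, which
has the same Gaussian measure as `K` because the frontier of a convex set is Lebesgue null. Hence
`interior K` lies in a half-space `{a | L a < 1}` with `‖L‖ = 1`. The law of `L` under the standard
Gaussian is `N(0, 1)`, so this half-space has measure `P(X < 0) + P(0 ≤ X < 1)`. By symmetry the
first term is at most `1/2`; the second is at most `1/√(2π) < 2/5`, since the density never exceeds
`1/√(2π)`. The sum is less than `9/10`.

The identification of the density `stdGaussian n` with Mathlib's
`ProbabilityTheory.stdGaussian`, from which the law of `L` is read off, is through characteristic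
functions (`charFun_stdGaussian_density`, `stdGaussian_eq`). The one-dimensional bound is
`gaussianReal_Iio_one_lt`.
-/

open MeasureTheory Real Pointwise RealInnerProductSpace
open scoped ENNReal

noncomputable section

/-- The Fourier transform of the Gaussian density. -/
lemma charFun_stdGaussian_density (n : ℕ) (t : EuclideanSpace ℝ (Fin n)) :
    charFun (stdGaussian n) t = Complex.exp (-‖t‖ ^ 2 / 2) := by
  rw [charFun_apply, stdGaussian, integral_withDensity_eq_integral_toReal_smul (by fun_prop)
    (by simp)]
  have hpos : (0 : ℝ) < (2 * π) ^ (-(n : ℝ) / 2) := by positivity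
  have key := GaussianFourier.integral_cexp_neg_mul_sq_norm_add
    (b := (1 / 2 : ℂ)) (by norm_num) Complex.I t
  have h1 : ∀ v : EuclideanSpace ℝ (Fin n),
      (ENNReal.ofReal ((2 * π) ^ (-(n : ℝ) / 2) * Real.exp (-‖v‖ ^ 2 / 2))).toReal •
        Complex.exp (⟪v, t⟫ * Complex.I) =
      (((2 * π) ^ (-(n : ℝ) / 2) : ℝ) : ℂ) *
        Complex.exp (-(1 / 2 : ℂ) * ‖v‖ ^ 2 + Complex.I * ⟪t, v⟫) := by
    intro v
    rw [ENNReal.toReal_ofReal (by positivity), Complex.real_smul, Complex.ofReal_mul, mul_assoc,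
      Complex.ofReal_exp, ← Complex.exp_add, real_inner_comm]
    congr 2
    push_cast
    ring
  simp_rw [h1]
  rw [integral_const_mul, key]
  have h2 : (π / (1 / 2 : ℂ)) ^ ((Module.finrank ℝ (EuclideanSpace ℝ (Fin n)) : ℂ) / 2) =
      (((2 * π) ^ ((n : ℝ) / 2) : ℝ) : ℂ) := by
    rw [Complex.ofReal_cpow (by positivity)]
    simp [mul_comm]
  rw [h2, ← mul_assoc, ← Complex.ofReal_mul, ← Real.rpow_add (by positivity)]
  simp only [Complex.I_sq]
  rw [show -(n : ℝ) / 2 + n / 2 = 0 by ring]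
  simp only [Real.rpow_zero, Complex.ofReal_one, one_mul]
  congr 1
  ring

/-- Finiteness is what uniqueness of characteristic functions needs. -/
instance isFiniteMeasure_stdGaussian_density (n : ℕ) : IsFiniteMeasure (stdGaussian n) := by
  refine isFiniteMeasure_withDensity_ofReal (Integrable.hasFiniteIntegral ?_)
  refine Integrable.const_mul ?_ _
  have h := GaussianFourier.integrable_cexp_neg_mul_sq_norm_add
    (V := EuclideanSpace ℝ (Fin n)) (b := (1 / 2 : ℂ)) (by norm_num) 0 0
  refine h.norm.congr (.of_forall fun v => ?_)
  simp only [Complex.norm_exp]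
  congr 1
  simp [← Complex.ofReal_pow]
  ring

/-- The measure with the Gaussian density is Mathlib's standard Gaussian. -/
lemma stdGaussian_eq (n : ℕ) :
    stdGaussian n = ProbabilityTheory.stdGaussian (EuclideanSpace ℝ (Fin n)) := by
  apply Measure.ext_of_charFun
  ext t
  rw [charFun_stdGaussian_density, ProbabilityTheory.charFun_stdGaussian]

lemma map_stdGaussian_of_norm_eq_one (n : ℕ) (L : StrongDual ℝ (EuclideanSpace ℝ (Fin n)))
    (hL : ‖L‖ = 1) :
    (stdGaussian n).map L = ProbabilityTheory.gaussianReal 0 1 := by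
  apply Measure.ext_of_charFun
  ext u
  rw [charFun_map_eq_charFunDual_smul, stdGaussian_eq, ProbabilityTheory.charFunDual_stdGaussian,
    ProbabilityTheory.charFun_gaussianReal, norm_smul, hL]
  congr 1
  simp [← Complex.ofReal_pow]
  ring

/-- The half-line `(-∞, 0)` has mass at most `1/2` by symmetry. -/
lemma gaussianReal_Iio_zero_le : (ProbabilityTheory.gaussianReal 0 1).real (Set.Iio 0) ≤ 1 / 2 := by
  have h : (ProbabilityTheory.gaussianReal 0 1).real (Set.Ioi 0) =
      (ProbabilityTheory.gaussianReal 0 1).real (Set.Iio 0) := by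
    conv_lhs => rw [← neg_zero (G := ℝ), ← ProbabilityTheory.gaussianReal_map_neg]
    rw [map_measureReal_apply (by fun_prop) measurableSet_Ioi]
    congr 1
    ext x
    simp
  have hd : Disjoint (Set.Iio (0 : ℝ)) (Set.Ioi 0) :=
    Set.disjoint_left.2 fun x hx hx' => lt_asymm (Set.mem_Iio.1 hx) (Set.mem_Ioi.1 hx')
  have hu := measureReal_union (μ := ProbabilityTheory.gaussianReal 0 1) hd measurableSet_Ioi
  have h1 : (ProbabilityTheory.gaussianReal 0 1).real (Set.Iio 0 ∪ Set.Ioi 0) ≤ 1 :=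
    measureReal_le_one
  linarith

lemma gaussianPDFReal_le_inv_sqrt (x : ℝ) :
    ProbabilityTheory.gaussianPDFReal 0 1 x ≤ (√(2 * π))⁻¹ := by
  rw [ProbabilityTheory.gaussianPDFReal]
  have : rexp (-(x - 0) ^ 2 / (2 * ((1 : NNReal) : ℝ))) ≤ 1 := by
    rw [Real.exp_le_one_iff]
    have := sq_nonneg (x - 0)
    simp only [NNReal.coe_one]
    linarith
  calc _ ≤ (√(2 * π * ((1 : NNReal) : ℝ)))⁻¹ * 1 := by gcongr
    _ = _ := by simp

/-- `(5/2)² = 6.25 < 2π`. -/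
lemma inv_sqrt_two_pi_lt : (√(2 * π))⁻¹ < 2 / 5 := by
  have h : (5 / 2 : ℝ) < √(2 * π) := by
    apply Real.lt_sqrt_of_sq_lt
    linarith [Real.pi_gt_d2]
  calc _ < (5 / 2 : ℝ)⁻¹ := by gcongr
    _ = _ := by norm_num

/-- The density is at most `1/√(2π)`, and `[0, 1)` has length one. -/
lemma gaussianReal_Ico_le :
    (ProbabilityTheory.gaussianReal 0 1).real (Set.Ico 0 1) ≤ (√(2 * π))⁻¹ := by
  rw [Measure.real, ProbabilityTheory.gaussianReal_apply 0 one_ne_zero]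
  apply ENNReal.toReal_le_of_le_ofReal (by positivity)
  calc ∫⁻ x in Set.Ico (0 : ℝ) 1, ProbabilityTheory.gaussianPDF 0 1 x
      ≤ ∫⁻ _ in Set.Ico (0 : ℝ) 1, ENNReal.ofReal (√(2 * π))⁻¹ :=
        lintegral_mono fun x => ENNReal.ofReal_le_ofReal (gaussianPDFReal_le_inv_sqrt x)
    _ = _ := by simp

lemma gaussianReal_Iio_one_lt : ProbabilityTheory.gaussianReal 0 1 (Set.Iio 1) < 9 / 10 := by
  have h : (ProbabilityTheory.gaussianReal 0 1).real (Set.Iio 1) < 9 / 10 := by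
    rw [← Set.Iio_union_Ico_eq_Iio (zero_le_one (α := ℝ))]
    calc _ ≤ _ := measureReal_union_le _ _
      _ < 9 / 10 := by
        linarith [gaussianReal_Iio_zero_le, gaussianReal_Ico_le, inv_sqrt_two_pi_lt]
  rw [← ENNReal.toReal_lt_toReal (measure_ne_top _ _) (by finiteness)]
  simpa [Measure.real, ENNReal.toReal_div] using h

/-- Passing to the interior of a convex set loses no Gaussian mass, as the frontier is null. -/
lemma stdGaussian_le_interior {n : ℕ} {K : Set (EuclideanSpace ℝ (Fin n))} (hK : Convex ℝ K) :
    stdGaussian n K ≤ stdGaussian n (interior K) := by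
  have hf : stdGaussian n (frontier K) = 0 :=
    withDensity_absolutelyContinuous _ _ (hK.addHaar_frontier volume)
  calc stdGaussian n K ≤ stdGaussian n (interior K ∪ frontier K) :=
        measure_mono (by rw [← closure_eq_interior_union_frontier]; exact subset_closure)
    _ ≤ _ := (measure_union_le _ _).trans (by rw [hf, add_zero])

/-- A convex set of standard Gaussian measure at least `9/10` contains the closed
Euclidean unit ball. -/
theorem ball_subset_of_gaussian_measure (n : ℕ) (hn : 1 ≤ n)
    (K : Set (EuclideanSpace ℝ (Fin n))) (hK : Convex ℝ K)
    (hmeas : (9 / 10 : ℝ≥0∞) ≤ stdGaussian n K) :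
    Metric.closedBall (0 : EuclideanSpace ℝ (Fin n)) 1 ⊆ K := by
  intro x hx
  rw [mem_closedBall_zero_iff] at hx
  by_contra hxK
  have hint := hmeas.trans (stdGaussian_le_interior hK)
  obtain ⟨f, hf⟩ := geometric_hahn_banach_open_point hK.interior isOpen_interior
    fun h => hxK (interior_subset h)
  have hne : (interior K).Nonempty := by
    rw [Set.nonempty_iff_ne_empty]
    intro h
    simp [h] at hint
  -- The separating functional is nonzero because it is strictly smaller somewhere than at `x`.
  have hf0 : 0 < ‖f‖ := by
    obtain ⟨a, ha⟩ := hne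
    rw [norm_pos_iff]
    rintro rfl
    simpa using hf a ha
  have hsub : interior K ⊆ (‖f‖⁻¹ • f) ⁻¹' Set.Iio 1 := by
    intro a ha
    simp only [Set.mem_preimage, Set.mem_Iio, smul_apply, smul_eq_mul]
    rw [inv_mul_lt_iff₀ hf0]
    calc f a < f x := hf a ha
      _ ≤ ‖f x‖ := le_norm_self _
      _ ≤ ‖f‖ * ‖x‖ := f.le_opNorm x
      _ ≤ ‖f‖ * 1 := by gcongr
  have hL : ‖‖f‖⁻¹ • f‖ = 1 := by
    rw [norm_smul, norm_inv, norm_norm, inv_mul_cancel₀ hf0.ne']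
  have hlt := gaussianReal_Iio_one_lt
  rw [← map_stdGaussian_of_norm_eq_one n _ hL,
    Measure.map_apply (ContinuousLinearMap.measurable _) measurableSet_Iio] at hlt
  exact absurd (hint.trans (measure_mono hsub)) hlt.not_ge

end
end
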